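/- There is a constant d₀ > 0 such that the following holds. For all integers s ≥ 0 and t ≥ 3 with s ≤ 10⁻⁵·t/ln t, for every graph H on s + t vertices and every set S of s vertices of H such that the average degree of H − S satisfies d(H − S) ≥ d₀, every graph G with average degree d(G) ≥ 3.895·t·√(ln d(H − S)) contains H as a minor; in particular f(H) ≤ 3.895·t·√(ln d(H − S)). -/

import Mathlib

/-! Every graph `G` of average degree `D` has a minor `G'` with minimum degree `δ ≥ 0.232 D` on
`n ≤ 8δ / 5` vertices (`exists_dense_minor`). This is Mader's argument applied twice: a minor
maximising a potential `e / n`, respectively `e³ / n⁴`, has many triangles on each edge, and one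
passes to the neighbourhood of a vertex of minimum degree.

Write `d = d(H - S)`, `L = √(ln d)` and `y = δ / n`, so that `δ ≥ 0.9 t L` when `D ≥ 3.895 t L`.
In `G'` any two vertices have at least `n / 4` common neighbours, and this persists inside a small
random reserve `R` (`exists_reserve`). Outside `R` one takes `t` disjoint random blocks of size
`a ≈ 0.75 L / y`. A pair of blocks has no edge between them with probability about
`(1 - y) ^ (a²) ≤ exp (-2 (a y)²) ≤ exp (-1.125 L²)`, much less than `1 / d` (`exists_blocks`,
`density_numeric`). Assigning the vertices of `H - S` to blocks at random (`exists_placement`), at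
most `t` of the edges of `H - S` are not realised. The reserve then supplies, greedily and
disjointly, a connected set dominating each block (`O(log a)` vertices), a connected set dominating
all of `G'` for each vertex of `S` (`O(log n)` vertices), and one connecting vertex for each missing
edge (`hasMinor_of_blocks`). The bound `s ≤ 10⁻⁵ t / ln t` ensures that all of this fits into `R`
(`budget_numeric`). -/

open SimpleGraph

/-- `H` is a minor of `G`: there is a family of nonempty, connected,
pairwise disjoint branch sets in `G`, one for each vertex of `H`, with an
edge of `G` between the branch sets of any two adjacent vertices of `H`. -/
def HasMinor {V : Type*} {W : Type*} (G : SimpleGraph V) (H : SimpleGraph W) : Prop :=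
  ∃ φ : W → Set V,
    (∀ w, (φ w).Nonempty) ∧
    (∀ w, (G.induce (φ w)).Connected) ∧
    (Pairwise fun w w' => Disjoint (φ w) (φ w')) ∧
    (∀ ⦃w w'⦄, H.Adj w w' → ∃ u ∈ φ w, ∃ v ∈ φ w', G.Adj u v)

/-- The average degree `2|E(G)|/|V(G)|` of a graph. -/
noncomputable def avgDeg {V : Type*} (G : SimpleGraph V) : ℝ :=
  2 * Nat.card G.edgeSet / Nat.card V

/-- `f(H)`: the infimum of all `D` such that every (finite) graph with average
degree at least `D` contains `H` as a minor. -/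
noncomputable def minorF {W : Type*} (H : SimpleGraph W) : ℝ :=
  sInf {D : ℝ | ∀ (V : Type) [Fintype V], ∀ G : SimpleGraph V, D ≤ avgDeg G → HasMinor G H}

/-! ### Minors: composition, deletions and contractions -/

/-- A union of connected branch sets, indexed by a set inducing a connected subgraph of the minor,
is connected. -/
theorem connected_biUnion {V W : Type} {G : SimpleGraph V} {H : SimpleGraph W}
    (φ : W → Set V) (hne : ∀ w, (φ w).Nonempty) (hc : ∀ w, (G.induce (φ w)).Connected)
    (ha : ∀ ⦃w w'⦄, H.Adj w w' → ∃ u ∈ φ w, ∃ v ∈ φ w', G.Adj u v)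
    (S : Set W) (hS : (H.induce S).Connected) :
    (G.induce (⋃ w ∈ S, φ w)).Connected := by
  have hsub : ∀ w ∈ S, φ w ⊆ ⋃ w ∈ S, φ w := fun w hw => Set.subset_biUnion_of_mem hw
  have hin : ∀ (w : W) (hw : w ∈ S) (x y : V) (hx : x ∈ φ w) (hy : y ∈ φ w),
      (G.induce (⋃ w ∈ S, φ w)).Reachable ⟨x, hsub w hw hx⟩ ⟨y, hsub w hw hy⟩ := by
    intro w hw x y hx hy
    exact ((hc w).preconnected ⟨x, hx⟩ ⟨y, hy⟩).map (induceHomOfLE _ (hsub w hw)).toHom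
  obtain ⟨⟨w0, hw0⟩⟩ := hS.nonempty
  obtain ⟨u0, hu0⟩ := hne w0
  have key : ∀ w : S, (H.induce S).Reachable ⟨w0, hw0⟩ w → ∀ (x : V) (hx : x ∈ φ w),
      (G.induce (⋃ w ∈ S, φ w)).Reachable ⟨u0, hsub w0 hw0 hu0⟩ ⟨x, hsub w w.2 hx⟩ := by
    intro w hw
    rw [reachable_iff_reflTransGen] at hw
    induction hw with
    | refl => intro x hx; exact hin w0 hw0 _ _ hu0 hx
    | tail _ hbc ih =>
      rename_i b c _
      intro x hx
      obtain ⟨y, hy, z, hz, hyz⟩ := ha hbc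
      refine (ih y hy).trans (Reachable.trans (Adj.reachable ?_) (hin c c.2 z x hz hx))
      exact hyz
  rw [connected_iff_exists_forall_reachable]
  refine ⟨⟨u0, hsub w0 hw0 hu0⟩, ?_⟩
  rintro ⟨x, hx⟩
  obtain ⟨w, hw, hxw⟩ := Set.mem_iUnion₂.1 hx
  exact key ⟨w, hw⟩ (hS.preconnected _ _) x hxw

theorem HasMinor.trans' {V W X : Type} {G : SimpleGraph V} {H : SimpleGraph W}
    {K : SimpleGraph X} (h₁ : HasMinor G H) (h₂ : HasMinor H K) : HasMinor G K := by
  obtain ⟨φ, hne, hc, hd, ha⟩ := h₁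
  obtain ⟨ψ, hne', hc', hd', ha'⟩ := h₂
  refine ⟨fun x => ⋃ w ∈ ψ x, φ w, ?_, ?_, ?_, ?_⟩
  · intro x
    obtain ⟨w, hw⟩ := hne' x
    obtain ⟨v, hv⟩ := hne w
    exact ⟨v, Set.mem_biUnion hw hv⟩
  · intro x
    exact connected_biUnion φ hne hc ha (ψ x) (hc' x)
  · intro x y hxy
    simp only [Set.disjoint_iUnion_left, Set.disjoint_iUnion_right]
    intro w hw w' hw'
    apply hd
    rintro rfl
    exact (Set.disjoint_left.1 (hd' hxy) hw' hw)
  · intro x y hxy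
    obtain ⟨w, hw, w', hw', hww⟩ := ha' hxy
    obtain ⟨u, hu, v, hv, huv⟩ := ha hww
    exact ⟨u, Set.mem_biUnion hw hu, v, Set.mem_biUnion hw' hv, huv⟩

theorem connected_induce_singleton {V : Type} (G : SimpleGraph V) (x : V) :
    (G.induce {x}).Connected := by
  rw [connected_iff_exists_forall_reachable]
  refine ⟨⟨x, rfl⟩, ?_⟩
  rintro ⟨y, rfl⟩
  exact Reachable.refl _

theorem hasMinor_induce {V : Type} (G : SimpleGraph V) (S : Set V) :
    HasMinor G (G.induce S) := by
  refine ⟨fun x => {x.1}, fun w => ⟨w.1, rfl⟩, fun w => connected_induce_singleton _ _, ?_, ?_⟩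
  · intro x y hxy
    simpa using fun h => hxy (Subtype.ext h)
  · intro x y hxy
    exact ⟨x, rfl, y, rfl, hxy⟩

theorem hasMinor_refl {V : Type} (G : SimpleGraph V) : HasMinor G G := by
  refine ⟨fun x => {x}, fun w => ⟨w, rfl⟩, fun w => connected_induce_singleton _ _, ?_, ?_⟩
  · intro x y hxy
    simpa using hxy
  · intro x y hxy
    exact ⟨x, rfl, y, rfl, hxy⟩

/-- Deleting `v` gives a minor with one vertex and `deg v` edges fewer. -/
theorem exists_delete {V : Type} [Fintype V] (G : SimpleGraph V) (v : V) :
    ∃ (V' : Type) (_ : Fintype V') (G' : SimpleGraph V'), HasMinor G G' ∧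
      Fintype.card V' + 1 = Fintype.card V ∧
      Nat.card G.edgeSet = Nat.card G'.edgeSet + (G.neighborSet v).ncard := by
  classical
  refine ⟨({v}ᶜ : Set V), inferInstance, G.induce {v}ᶜ, hasMinor_induce G _, ?_, ?_⟩
  · have := Fintype.card_pos_iff.2 ⟨v⟩
    rw [Fintype.card_compl_set]
    simp; omega
  · have h := card_edgeFinset_induce_compl_singleton G v
    rw [card_edgeFinset_deleteIncidenceSet] at h
    have h3 : G.degree v ≤ G.edgeFinset.card := by
      rw [← card_incidenceFinset_eq_degree]
      exact Finset.card_le_card (G.incidenceFinset_subset v)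
    rw [Nat.card_eq_fintype_card, Nat.card_eq_fintype_card, ← edgeFinset_card, ← edgeFinset_card,
      Set.ncard_eq_toFinset_card', ← neighborFinset_def, card_neighborFinset_eq_degree]
    convert (Nat.sub_eq_iff_eq_add h3).1 h.symm

/-- The contraction of `v` into `u`, as a graph on the vertices other than `v`. -/
def contr {V : Type} (G : SimpleGraph V) (u v : V) : SimpleGraph ({v}ᶜ : Set V) where
  Adj x y := x ≠ y ∧ (G.Adj x y ∨ (x.1 = u ∧ G.Adj v y) ∨ (y.1 = u ∧ G.Adj v x))
  symm := ⟨by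
    rintro x y ⟨h, h'⟩
    refine ⟨h.symm, ?_⟩
    rcases h' with h' | h' | h'
    · exact Or.inl h'.symm
    · exact Or.inr (Or.inr h')
    · exact Or.inr (Or.inl h')⟩
  loopless := ⟨by rintro x ⟨h, -⟩; exact h rfl⟩

/-- The branch sets are `{u, v}` for `u` and singletons for all other vertices. -/
theorem hasMinor_contr {V : Type} (G : SimpleGraph V) {u v : V} (h : G.Adj u v) :
    HasMinor G (contr G u v) := by
  classical
  let φ : ({v}ᶜ : Set V) → Set V := fun x => if x.1 = u then {u, v} else {x.1}
  have hφ1 : ∀ x, x.1 = u → φ x = {u, v} := fun x hx => if_pos hx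
  have hφ2 : ∀ x, x.1 ≠ u → φ x = {x.1} := fun x hx => if_neg hx
  have hmem : ∀ x, x.1 ∈ φ x := by
    intro x
    by_cases hx : x.1 = u
    · rw [hφ1 x hx]; simp [hx]
    · rw [hφ2 x hx]; simp
  refine ⟨φ, fun x => ⟨x.1, hmem x⟩, ?_, ?_, ?_⟩
  · intro x
    by_cases hx : x.1 = u
    · rw [hφ1 x hx]; exact induce_pair_connected_of_adj h
    · rw [hφ2 x hx]; exact connected_induce_singleton _ _
  · intro x y hxy
    have hne : x.1 ≠ y.1 := fun h => hxy (Subtype.ext h)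
    have hx := x.2
    have hy := y.2
    simp only [Set.mem_compl_iff, Set.mem_singleton_iff] at hx hy
    by_cases h1 : x.1 = u <;> by_cases h2 : y.1 = u
    · exact absurd (h1.trans h2.symm) hne
    · rw [hφ1 x h1, hφ2 y h2]; simp [hy, h2]
    · rw [hφ1 y h2, hφ2 x h1]; simp [hx, h1]
    · rw [hφ2 y h2, hφ2 x h1]; simp [hne]
  · rintro x y ⟨-, hxy | ⟨hx, hxy⟩ | ⟨hy, hxy⟩⟩
    · exact ⟨x.1, hmem x, y.1, hmem y, hxy⟩
    · exact ⟨v, by rw [hφ1 x hx]; simp, y.1, hmem y, hxy⟩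
    · exact ⟨x.1, hmem x, v, by rw [hφ1 y hy]; simp, hxy.symm⟩

/-- Contracting an edge `uv` destroys that edge and merges the pairs of edges to common neighbours;
no other edge is lost. -/
theorem edges_contr {V : Type} [Fintype V] (G : SimpleGraph V) {u v : V} (h : G.Adj u v) :
    Nat.card G.edgeSet ≤
      Nat.card (contr G u v).edgeSet + 1 + (G.commonNeighbors u v).ncard := by
  classical
  have hN : (G.neighborSet v).ncard
      ≤ (G.neighborSet v \ (insert u (G.neighborSet u))).ncard + 1
        + (G.commonNeighbors u v).ncard := by
    have : G.neighborSet v ⊆ ((G.neighborSet v \ (insert u (G.neighborSet u))) ∪ {u})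
        ∪ G.commonNeighbors u v := by
      intro x hx
      by_cases h1 : x = u
      · simp [h1]
      by_cases h2 : G.Adj u x
      · right; exact ⟨h2, hx⟩
      · left; left; exact ⟨hx, by simp [h1, h2]⟩
    refine (Set.ncard_le_ncard this (Set.toFinite _)).trans ?_
    refine (Set.ncard_union_le _ _).trans ?_
    have := Set.ncard_union_le (G.neighborSet v \ (insert u (G.neighborSet u))) {u}
    simp only [Set.ncard_singleton] at this
    omega
  have hE : G.edgeSet.ncard ≤ (G.edgeSet \ G.incidenceSet v).ncard + (G.neighborSet v).ncard := by
    have h1 : (G.incidenceSet v).ncard = (G.neighborSet v).ncard := by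
      rw [← Nat.card_coe_set_eq, ← Nat.card_coe_set_eq, Nat.card_eq_fintype_card,
        Nat.card_eq_fintype_card, card_incidenceSet_eq_degree, card_neighborSet_eq_degree]
    rw [← h1]
    have := Set.ncard_le_ncard_sdiff_add_ncard G.edgeSet (G.incidenceSet v)
    omega
  have hF : ((G.edgeSet \ G.incidenceSet v) ∪
      (fun x => s(u, x)) '' (G.neighborSet v \ (insert u (G.neighborSet u)))) ⊆
      (Sym2.map Subtype.val) '' (contr G u v).edgeSet := by
    rintro e (⟨he, hv⟩ | ⟨x, ⟨hx, hxu⟩, rfl⟩)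
    · induction e using Sym2.ind with
      | _ x y =>
        have hxy : G.Adj x y := he
        have hxv : x ≠ v := by rintro rfl; exact hv ⟨he, by simp⟩
        have hyv : y ≠ v := by rintro rfl; exact hv ⟨he, by simp⟩
        refine ⟨s(⟨x, hxv⟩, ⟨y, hyv⟩), ?_, by simp⟩
        exact ⟨fun hh => hxy.ne (congrArg Subtype.val hh), Or.inl hxy⟩
    · simp only [Set.mem_insert_iff, mem_neighborSet, not_or] at hxu hx
      refine ⟨s(⟨u, h.ne⟩, ⟨x, hx.ne'⟩), ?_, by simp⟩
      exact ⟨fun hh => hxu.1 (congrArg Subtype.val hh).symm, Or.inr (Or.inl ⟨rfl, hx⟩)⟩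
  have hd : Disjoint (G.edgeSet \ G.incidenceSet v)
      ((fun x => s(u, x)) '' (G.neighborSet v \ (insert u (G.neighborSet u)))) := by
    rw [Set.disjoint_left]
    rintro e ⟨he, -⟩ ⟨x, ⟨-, hx⟩, rfl⟩
    exact hx (Or.inr he)
  have hinj : ((fun x => s(u, x)) '' (G.neighborSet v \ (insert u (G.neighborSet u)))).ncard
      = (G.neighborSet v \ (insert u (G.neighborSet u))).ncard := by
    apply Set.ncard_image_of_injective
    intro x y hxy
    exact Sym2.congr_right.1 hxy
  have hcard := Set.ncard_le_ncard hF (Set.toFinite _)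
  rw [Set.ncard_union_eq hd (Set.toFinite _) (Set.toFinite _), hinj,
    Set.ncard_image_of_injective _ (Sym2.map.injective Subtype.val_injective)] at hcard
  rw [Nat.card_coe_set_eq, Nat.card_coe_set_eq]
  omega

theorem exists_contract {V : Type} [Fintype V] (G : SimpleGraph V) {u v : V} (h : G.Adj u v) :
    ∃ (V' : Type) (_ : Fintype V') (G' : SimpleGraph V'), HasMinor G G' ∧
      Fintype.card V' + 1 = Fintype.card V ∧
      Nat.card G.edgeSet ≤ Nat.card G'.edgeSet + 1 + (G.commonNeighbors u v).ncard := by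
  classical
  refine ⟨({v}ᶜ : Set V), inferInstance, contr G u v, hasMinor_contr G h, ?_, edges_contr G h⟩
  have := Fintype.card_pos_iff.2 ⟨v⟩
  rw [Fintype.card_compl_set]
  simp; omega

/-- Any potential `Φ` of the numbers of vertices and edges, monotone in the latter, can be pushed up
by passing to a minor for which no vertex deletion and no edge contraction increases `Φ`. Natural
subtraction is harmless: the subtracted numbers of edges never exceed the total. -/
theorem exists_local_max (Φ : ℕ → ℕ → ℝ) (hΦ : ∀ n e e', e ≤ e' → Φ n e ≤ Φ n e') :
    ∀ (N : ℕ) (V : Type) [Fintype V] (G : SimpleGraph V), Fintype.card V = N →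
    ∃ (V' : Type) (_ : Fintype V') (G' : SimpleGraph V'), HasMinor G G' ∧
      Φ (Fintype.card V) (Nat.card G.edgeSet) ≤ Φ (Fintype.card V') (Nat.card G'.edgeSet) ∧
      (∀ v, Φ (Fintype.card V' - 1) (Nat.card G'.edgeSet - (G'.neighborSet v).ncard) ≤
        Φ (Fintype.card V') (Nat.card G'.edgeSet)) ∧
      (∀ u v, G'.Adj u v →
        Φ (Fintype.card V' - 1) (Nat.card G'.edgeSet - 1 - (G'.commonNeighbors u v).ncard) ≤
        Φ (Fintype.card V') (Nat.card G'.edgeSet)) := by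
  intro N
  induction N with
  | zero =>
    intro V _ G hV
    have := Fintype.card_eq_zero_iff.1 hV
    exact ⟨V, inferInstance, G, hasMinor_refl G, le_refl _, fun v => this.elim v,
      fun v => this.elim v⟩
  | succ N ih =>
    intro V _ G hV
    by_cases h1 : ∀ v, Φ (Fintype.card V - 1) (Nat.card G.edgeSet - (G.neighborSet v).ncard) ≤
        Φ (Fintype.card V) (Nat.card G.edgeSet)
    · by_cases h2 : ∀ u v, G.Adj u v →
        Φ (Fintype.card V - 1) (Nat.card G.edgeSet - 1 - (G.commonNeighbors u v).ncard) ≤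
        Φ (Fintype.card V) (Nat.card G.edgeSet)
      · exact ⟨V, inferInstance, G, hasMinor_refl G, le_refl _, h1, h2⟩
      · push Not at h2
        obtain ⟨u, v, huv, h2⟩ := h2
        obtain ⟨V', i, G', hm, hn, he⟩ := exists_contract G huv
        obtain ⟨V'', i, G'', hm', hP, hr⟩ := ih V' G' (by omega)
        refine ⟨V'', i, G'', hm.trans' hm', ?_, hr⟩
        refine le_trans (le_trans h2.le ?_) hP
        rw [show Fintype.card V - 1 = Fintype.card V' by omega]
        exact hΦ _ _ _ (by omega)
    · push Not at h1
      obtain ⟨v, h1⟩ := h1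
      obtain ⟨V', i, G', hm, hn, he⟩ := exists_delete G v
      obtain ⟨V'', i, G'', hm', hP, hr⟩ := ih V' G' (by omega)
      refine ⟨V'', i, G'', hm.trans' hm', ?_, hr⟩
      refine le_trans (le_trans h1.le ?_) hP
      rw [show Fintype.card V - 1 = Fintype.card V' by omega]
      exact hΦ _ _ _ (by omega)

/-! ### Dense minors of graphs with large average degree -/

theorem sum_ncard_neighborSet {V : Type} [Fintype V] (G : SimpleGraph V) :
    ∑ v, (G.neighborSet v).ncard = 2 * Nat.card G.edgeSet := by
  classical
  rw [Nat.card_eq_fintype_card, ← edgeFinset_card, ← sum_degrees_eq_twice_card_edges]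
  refine Finset.sum_congr rfl fun v _ => ?_
  rw [← Nat.card_coe_set_eq, Nat.card_eq_fintype_card, card_neighborSet_eq_degree]

theorem min_degree_le_edges {V : Type} [Fintype V] (G : SimpleGraph V) (c : ℝ)
    (hc : ∀ v, c ≤ (G.neighborSet v).ncard) :
    Fintype.card V * c ≤ 2 * (Nat.card G.edgeSet : ℝ) := by
  have h := sum_ncard_neighborSet G
  have h' : (∑ v, ((G.neighborSet v).ncard : ℝ)) = 2 * (Nat.card G.edgeSet : ℝ) := by
    exact_mod_cast h
  rw [← h', ← Finset.card_univ, ← nsmul_eq_mul]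
  exact Finset.card_nsmul_le_sum _ _ _ fun v _ => hc v

theorem edges_le_sq {V : Type} [Fintype V] (G : SimpleGraph V) :
    2 * (Nat.card G.edgeSet : ℝ) ≤ (Fintype.card V : ℝ) * Fintype.card V := by
  have h := sum_ncard_neighborSet G
  have h2 : ∑ v, (G.neighborSet v).ncard ≤ Fintype.card V * Fintype.card V := by
    rw [← smul_eq_mul, ← Finset.card_univ]
    refine Finset.sum_le_card_nsmul _ _ _ fun v _ => ?_
    rw [Finset.card_univ, ← Nat.card_eq_fintype_card]
    exact Set.ncard_le_card _
  rw [h] at h2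
  exact_mod_cast h2

/-- If adjacent vertices always have at least `c` common neighbours, then the neighbourhood of a
vertex of minimum degree induces a graph with minimum degree at least `c` whose order is at most
the average degree of `G`. -/
theorem exists_nbhd {V : Type} [Fintype V] (G : SimpleGraph V) (c : ℝ) (hV : 0 < Fintype.card V)
    (hpos : ∀ v, 0 < (G.neighborSet v).ncard)
    (hc : ∀ u v, G.Adj u v → c ≤ (G.commonNeighbors u v).ncard) :
    ∃ (V' : Type) (_ : Fintype V') (G' : SimpleGraph V'), HasMinor G G' ∧
      0 < Fintype.card V' ∧
      (Fintype.card V' : ℝ) * Fintype.card V ≤ 2 * (Nat.card G.edgeSet : ℝ) ∧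
      ∀ v, c ≤ (G'.neighborSet v).ncard := by
  classical
  have : Nonempty V := Fintype.card_pos_iff.1 hV
  obtain ⟨v, -, hv⟩ := Finset.exists_min_image Finset.univ (fun v => (G.neighborSet v).ncard)
    Finset.univ_nonempty
  have hcard : Fintype.card (G.neighborSet v) = (G.neighborSet v).ncard := by
    rw [← Nat.card_coe_set_eq, Nat.card_eq_fintype_card]
  refine ⟨G.neighborSet v, inferInstance, G.induce (G.neighborSet v), hasMinor_induce _ _,
    ?_, ?_, ?_⟩
  · rw [hcard]; exact hpos v
  · rw [hcard, mul_comm]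
    apply min_degree_le_edges
    intro u
    exact_mod_cast hv u (Finset.mem_univ _)
  · intro u
    refine (hc v u u.2).trans ?_
    have : G.commonNeighbors v u = Subtype.val '' ((G.induce (G.neighborSet v)).neighborSet u) := by
      ext x
      simp only [mem_commonNeighbors, Set.mem_image, Subtype.exists, mem_neighborSet]
      constructor
      · rintro ⟨h1, h2⟩
        exact ⟨x, h1, h2, rfl⟩
      · rintro ⟨y, h1, h2, rfl⟩
        exact ⟨h1, h2⟩
    rw [this, Set.ncard_image_of_injective _ Subtype.val_injective]

/-- A minor at which `e / n` is maximal has at least `e / n - 1` triangles on every edge, so a neighbourhood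
in it has order at most `D' = 2e / n` and minimum degree at least `D' / 2 - 1`. -/
theorem stage_one {V : Type} [Fintype V] (G : SimpleGraph V) (D : ℝ) (hD : 0 < D)
    (h : D ≤ avgDeg G) :
    ∃ (V' : Type) (_ : Fintype V') (G' : SimpleGraph V') (D' : ℝ), HasMinor G G' ∧
      0 < Fintype.card V' ∧ D ≤ D' ∧ (Fintype.card V' : ℝ) ≤ D' ∧
      ∀ v, D' / 2 - 1 ≤ (G'.neighborSet v).ncard := by
  obtain ⟨V₁, i₁, G₁, hm, hΦ, hdel, hcon⟩ := exists_local_max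
    (fun n e => (e : ℝ) / n) (by intro n e e' h; gcongr) _ V G rfl
  have hΦ' : D / 2 ≤ (Nat.card G₁.edgeSet : ℝ) / Fintype.card V₁ := by
    refine le_trans ?_ hΦ
    rw [avgDeg, Nat.card_eq_fintype_card (α := V), mul_div_assoc] at h
    linarith
  set e : ℝ := (Nat.card G₁.edgeSet : ℝ) with he
  set n : ℕ := Fintype.card V₁ with hn
  have he2 : 2 * e ≤ (n : ℝ) * n := edges_le_sq G₁
  have hn0 : 0 < n := by
    rcases Nat.eq_zero_or_pos n with h0 | h0
    · rw [h0] at hΦ'; simp at hΦ'; linarith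
    · exact h0
  have hnr : (0 : ℝ) < n := by exact_mod_cast hn0
  have hepos : 0 < e := by
    by_contra hh
    have : e / n ≤ 0 := div_nonpos_of_nonpos_of_nonneg (not_lt.1 hh) hnr.le
    linarith
  have hn2 : 2 ≤ n := by
    by_contra hh
    have h1 : n = 1 := by omega
    have : Nat.card G₁.edgeSet = 0 := by
      have : 2 * e ≤ 1 := by simpa [h1] using he2
      have : e < 1 := by linarith
      have := he ▸ this
      exact_mod_cast (Nat.lt_one_iff.1 (by exact_mod_cast this))
    rw [he, this] at hepos
    simp at hepos
  have hn1 : ((n - 1 : ℕ) : ℝ) = n - 1 := by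
    rw [Nat.cast_sub (by omega)]; simp
  have hn1' : (0 : ℝ) < n - 1 := by
    have : (2 : ℝ) ≤ n := by exact_mod_cast hn2
    linarith
  have hpos : ∀ v, 0 < (G₁.neighborSet v).ncard := by
    intro v
    have h1 := hdel v
    rw [hn1, div_le_div_iff₀ hn1' hnr] at h1
    by_contra hh
    have h0 : (G₁.neighborSet v).ncard = 0 := by omega
    rw [h0, Nat.sub_zero] at h1
    change e * n ≤ e * (n - 1) at h1
    nlinarith
  have hcom : ∀ u v, G₁.Adj u v → e / n - 1 ≤ (G₁.commonNeighbors u v).ncard := by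
    intro u v huv
    have h1 := hcon u v huv
    rw [hn1, div_le_div_iff₀ hn1' hnr] at h1
    have h2 : e - 1 - ((G₁.commonNeighbors u v).ncard : ℝ) ≤
        ((Nat.card G₁.edgeSet - 1 - (G₁.commonNeighbors u v).ncard : ℕ) : ℝ) := by
      have : Nat.card G₁.edgeSet ≤ (Nat.card G₁.edgeSet - 1 - (G₁.commonNeighbors u v).ncard)
        + 1 + (G₁.commonNeighbors u v).ncard := by omega
      have : (Nat.card G₁.edgeSet : ℝ) ≤
        ((Nat.card G₁.edgeSet - 1 - (G₁.commonNeighbors u v).ncard : ℕ) : ℝ)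
        + 1 + (G₁.commonNeighbors u v).ncard := by exact_mod_cast this
      linarith
    have h3 := mul_le_mul_of_nonneg_right h2 hnr.le
    rw [sub_le_iff_le_add, div_le_iff₀ hnr]
    nlinarith
  obtain ⟨V₂, i₂, G₂, hm2, hc2, hle, hdeg⟩ := exists_nbhd G₁ (e / n - 1) hn0 hpos hcom
  refine ⟨V₂, i₂, G₂, 2 * e / n, hm.trans' hm2, hc2, ?_, ?_, ?_⟩
  · rw [mul_div_assoc]; linarith
  · rw [le_div_iff₀ hnr]; exact hle
  · intro v
    refine le_trans (le_of_eq ?_) (hdeg v)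
    ring

/-- If contracting an edge does not increase `e³ / n⁴`, where `f` is the number of edges after the
contraction, then the loss `e - f` is at least `4e / (3n + 1)`. -/
theorem cube_step (n e f : ℝ) (hn : 2 ≤ n) (he : 0 < e)
    (h : f ^ 3 * n ^ 4 ≤ e ^ 3 * (n - 1) ^ 4) : f * (3 * n + 1) ≤ e * (3 * n - 3) := by
  by_contra hh
  push Not at hh
  have h1 : (e * (3 * n - 3)) ^ 3 < (f * (3 * n + 1)) ^ 3 := by
    apply pow_lt_pow_left₀ hh _ (by norm_num)
    apply mul_nonneg he.le; linarith
  have h2 : (e * (3 * n - 3)) ^ 3 * n ^ 4 < (f * (3 * n + 1)) ^ 3 * n ^ 4 :=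
    mul_lt_mul_of_pos_right h1 (by positivity)
  have h3 : (f ^ 3 * n ^ 4) * (3 * n + 1) ^ 3 ≤ (e ^ 3 * (n - 1) ^ 4) * (3 * n + 1) ^ 3 :=
    mul_le_mul_of_nonneg_right h (by positivity)
  have h4 : (n - 1) * (3 * n + 1) ^ 3 ≤ 27 * n ^ 4 := by
    nlinarith [sq_nonneg n]
  have h5 : 0 < e ^ 3 * (n - 1) ^ 3 := by
    have : 0 < n - 1 := by linarith
    positivity
  have h6 := mul_le_mul_of_nonneg_left h4 h5.le
  nlinarith

/-- Starting from a graph with minimum degree about half its order, maximise `e³ / n⁴` over minors.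
With average degree `m` the maximiser has about `2m / 3` triangles on every edge, and `m` is still
at least about `D / √8`; a neighbourhood of a vertex of minimum degree then has density about
`2 / 3`. -/
theorem stage_two {V : Type} [Fintype V] (G : SimpleGraph V) (D : ℝ) (hD : 1000 ≤ D)
    (hV : 0 < Fintype.card V) (hVD : (Fintype.card V : ℝ) ≤ D)
    (h : ∀ v, D / 2 - 1 ≤ (G.neighborSet v).ncard) :
    ∃ (V' : Type) (_ : Fintype V') (G' : SimpleGraph V') (δ : ℝ), HasMinor G G' ∧
      0 < Fintype.card V' ∧ 0.232 * D ≤ δ ∧ 5 * (Fintype.card V' : ℝ) ≤ 8 * δ ∧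
      ∀ v, δ ≤ (G'.neighborSet v).ncard := by
  obtain ⟨V₁, i₁, G₁, hm, hΦ, hdel, hcon⟩ := exists_local_max
    (fun n e => (e : ℝ) ^ 3 / n ^ 4) (by intro n e e' h; gcongr) _ V G rfl
  set g : ℝ := D / 2 - 1 with hg
  have hgpos : 0 < g := by rw [hg]; linarith
  have hΦ' : g ^ 3 / (8 * D) ≤ (Nat.card G₁.edgeSet : ℝ) ^ 3 / (Fintype.card V₁ : ℝ) ^ 4 := by
    refine le_trans ?_ hΦ
    have h1 := min_degree_le_edges G g h
    have hvr : (0 : ℝ) < Fintype.card V := by exact_mod_cast hV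
    have h2 : (Fintype.card V * g / 2) ^ 3 ≤ (Nat.card G.edgeSet : ℝ) ^ 3 := by
      apply pow_le_pow_left₀ (by positivity); linarith
    rw [div_le_div_iff₀ (by positivity) (by positivity)]
    have h3 : g ^ 3 * (Fintype.card V : ℝ) ^ 4 ≤ (g ^ 3 * (Fintype.card V : ℝ) ^ 3) * D := by
      have := mul_le_mul_of_nonneg_left hVD
        (show 0 ≤ g ^ 3 * (Fintype.card V : ℝ) ^ 3 by positivity)
      nlinarith
    have h4 := mul_le_mul_of_nonneg_right h2 (show 0 ≤ 8 * D by linarith)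
    nlinarith
  set e : ℝ := (Nat.card G₁.edgeSet : ℝ) with he
  set n : ℕ := Fintype.card V₁ with hn
  have he2 : 2 * e ≤ (n : ℝ) * n := edges_le_sq G₁
  have hΦpos : 0 < g ^ 3 / (8 * D) := by positivity
  have hn0 : 0 < n := by
    rcases Nat.eq_zero_or_pos n with h0 | h0
    · rw [h0] at hΦ'; simp at hΦ'; linarith
    · exact h0
  have hnr : (0 : ℝ) < n := by exact_mod_cast hn0
  have hepos : 0 < e := by
    have h0 : 0 ≤ e := by rw [he]; positivity
    rcases h0.eq_or_lt with h0 | h0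
    · rw [← h0] at hΦ'; simp at hΦ'; linarith
    · exact h0
  have hn2 : 2 ≤ n := by
    by_contra hh
    have h1 : n = 1 := by omega
    have : Nat.card G₁.edgeSet = 0 := by
      have : 2 * e ≤ 1 := by simpa [h1] using he2
      have : e < 1 := by linarith
      have := he ▸ this
      exact_mod_cast (Nat.lt_one_iff.1 (by exact_mod_cast this))
    rw [he, this] at hepos
    simp at hepos
  have hn1 : ((n - 1 : ℕ) : ℝ) = n - 1 := by
    rw [Nat.cast_sub (by omega)]; simp
  have hn2r : (2 : ℝ) ≤ n := by exact_mod_cast hn2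
  have hn1' : (0 : ℝ) < n - 1 := by linarith
  set m : ℝ := 2 * e / n with hmdef
  have hmn : m ≤ n := by
    rw [hmdef, div_le_iff₀ hnr]; exact he2
  have hmpos : 0 < m := by rw [hmdef]; positivity
  have hm2 : g ^ 3 ≤ m ^ 2 * D := by
    have h1 : e = m * n / 2 := by rw [hmdef]; field_simp
    rw [h1, div_le_div_iff₀ (by positivity) (by positivity)] at hΦ'
    have h2 : g ^ 3 * (n : ℝ) ^ 4 ≤ m ^ 3 * n ^ 3 * D := by nlinarith
    have h3 : m ^ 3 * n ^ 3 * D ≤ m ^ 2 * D * (n : ℝ) ^ 4 := by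
      have := mul_le_mul_of_nonneg_left hmn
        (show 0 ≤ m ^ 2 * (n : ℝ) ^ 3 * D by positivity)
      nlinarith
    exact le_of_mul_le_mul_right (h2.trans h3) (by positivity)
  have hmD : 0.3514 * D ≤ m := by
    have h1 : 0.498 * D ≤ g := by rw [hg]; linarith
    have h2 : (0.498 * D) ^ 3 ≤ g ^ 3 := pow_le_pow_left₀ (by positivity) h1 _
    have hDp : 0 < D := by linarith
    have h3 : (0.498) ^ 3 * D ^ 2 ≤ m ^ 2 := by
      have : (0.498) ^ 3 * D ^ 2 * D ≤ m ^ 2 * D := by nlinarith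
      exact le_of_mul_le_mul_right this hDp
    refine (pow_le_pow_iff_left₀ (by positivity) hmpos.le two_ne_zero).1 (le_trans ?_ h3)
    nlinarith [sq_nonneg D]
  have hpos : ∀ v, 0 < (G₁.neighborSet v).ncard := by
    intro v
    have h1 := hdel v
    rw [hn1, div_le_div_iff₀ (by positivity) (by positivity)] at h1
    by_contra hh
    have h0 : (G₁.neighborSet v).ncard = 0 := by omega
    rw [h0, Nat.sub_zero] at h1
    change e ^ 3 * n ^ 4 ≤ e ^ 3 * (n - 1) ^ 4 at h1
    have := le_of_mul_le_mul_left h1 (by positivity)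
    have := (pow_le_pow_iff_left₀ hnr.le hn1'.le (by norm_num)).1 this
    linarith
  have hcom : ∀ u v, G₁.Adj u v → 4 * e / (3 * n + 1) - 1 ≤ (G₁.commonNeighbors u v).ncard := by
    intro u v huv
    have h1 := hcon u v huv
    rw [hn1, div_le_div_iff₀ (by positivity) (by positivity)] at h1
    have h2 : e - 1 - ((G₁.commonNeighbors u v).ncard : ℝ) ≤
        ((Nat.card G₁.edgeSet - 1 - (G₁.commonNeighbors u v).ncard : ℕ) : ℝ) := by
      have : Nat.card G₁.edgeSet ≤ (Nat.card G₁.edgeSet - 1 - (G₁.commonNeighbors u v).ncard)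
        + 1 + (G₁.commonNeighbors u v).ncard := by omega
      have : (Nat.card G₁.edgeSet : ℝ) ≤
        ((Nat.card G₁.edgeSet - 1 - (G₁.commonNeighbors u v).ncard : ℕ) : ℝ)
        + 1 + (G₁.commonNeighbors u v).ncard := by exact_mod_cast this
      linarith
    have h3 := cube_step n e _ hn2r hepos h1
    have h4 := mul_le_mul_of_nonneg_right h2 (show 0 ≤ 3 * (n : ℝ) + 1 by positivity)
    rw [sub_le_iff_le_add, div_le_iff₀ (by positivity)]
    nlinarith
  obtain ⟨V₂, i₂, G₂, hm2, hc2, hle, hdeg⟩ := exists_nbhd G₁ (4 * e / (3 * n + 1) - 1) hn0 hpos hcom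
  refine ⟨V₂, i₂, G₂, 2 * m / 3 - 2, hm.trans' hm2, hc2, ?_, ?_, ?_⟩
  · linarith
  · have : (Fintype.card V₂ : ℝ) ≤ m := by
      rw [hmdef, le_div_iff₀ hnr]; exact hle
    linarith
  · intro v
    refine le_trans ?_ (hdeg v)
    have h1 : e = m * n / 2 := by rw [hmdef]; field_simp
    have : 2 * m / 3 - 1 ≤ 4 * e / (3 * n + 1) := by
      rw [h1, le_div_iff₀ (by positivity)]
      nlinarith
    linarith

/-- Every graph of large average degree `D` has a minor of minimum degree `δ ≥ 0.232 D` whose order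
is at most `8δ / 5`. -/
theorem exists_dense_minor {V : Type} [Fintype V] (G : SimpleGraph V) (D : ℝ) (hD : 1000 ≤ D)
    (h : D ≤ avgDeg G) :
    ∃ (V' : Type) (_ : Fintype V') (G' : SimpleGraph V') (δ : ℝ), HasMinor G G' ∧
      0 < Fintype.card V' ∧ 0.232 * D ≤ δ ∧ 5 * (Fintype.card V' : ℝ) ≤ 8 * δ ∧
      ∀ v, δ ≤ (G'.neighborSet v).ncard := by
  obtain ⟨V₁, i₁, G₁, D', hm, hc, hDD, hV, hd⟩ := stage_one G D (by linarith) h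
  obtain ⟨V₂, i₂, G₂, δ, hm2, hc2, h1, h2, h3⟩ := stage_two G₁ D' (hD.trans hDD) hc hV hd
  exact ⟨V₂, i₂, G₂, δ, hm.trans' hm2, hc2, by linarith, h2, h3⟩

/-! ### Connected dominating sets -/

/-- Attaching vertices, each adjacent to a connected set `X`, keeps the set connected. -/
theorem connected_attach {V : Type} (G : SimpleGraph V) (X Y : Set V)
    (hX : (G.induce X).Connected) (hY : ∀ y ∈ Y, ∃ x ∈ X, G.Adj x y) :
    (G.induce (X ∪ Y)).Connected := by
  obtain ⟨⟨x₀, hx₀⟩⟩ := hX.nonempty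
  have hXX : ∀ x (hx : x ∈ X), (G.induce (X ∪ Y)).Reachable ⟨x₀, Or.inl hx₀⟩ ⟨x, Or.inl hx⟩ := by
    intro x hx
    exact (hX.preconnected ⟨x₀, hx₀⟩ ⟨x, hx⟩).map
      (induceHomOfLE G (Set.subset_union_left : X ⊆ X ∪ Y)).toHom
  rw [connected_iff_exists_forall_reachable]
  refine ⟨⟨x₀, Or.inl hx₀⟩, ?_⟩
  rintro ⟨y, hy | hy⟩
  · exact hXX y hy
  · obtain ⟨x, hx, hxy⟩ := hY y hy
    exact (hXX x hx).trans (Adj.reachable hxy)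

open Classical in
/-- Greedy domination: if every vertex sees at least a twentieth of `R`, then `l` vertices of `R`
leave at most a fraction `(19 / 20) ^ l` of `A` undominated. -/
theorem exists_dominating {V : Type} (G : SimpleGraph V) (A R : Finset V)
    (hR : R.Nonempty) (h : ∀ v, R.card ≤ 20 * (R.filter fun x => G.Adj v x).card) (l : ℕ) :
    ∃ X ⊆ R, X.card ≤ l ∧
      20 ^ l * (A.filter fun v => ∀ x ∈ X, ¬ G.Adj v x).card ≤ 19 ^ l * A.card := by
  induction l with
  | zero => exact ⟨∅, by simp, by simp, by simp⟩
  | succ l ih =>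
    obtain ⟨X, hXR, hXl, hX⟩ := ih
    set T := A.filter fun v => ∀ x ∈ X, ¬ G.Adj v x with hT
    have hex : ∃ x ∈ R, T.card ≤ 20 * (T.filter fun v => G.Adj v x).card := by
      by_contra hcon
      push Not at hcon
      have h1 : ∑ x ∈ R, 20 * (T.filter fun v => G.Adj v x).card < ∑ x ∈ R, T.card :=
        Finset.sum_lt_sum_of_nonempty hR hcon
      have h2 : ∑ x ∈ R, (T.filter fun v => G.Adj v x).card
          = ∑ v ∈ T, (R.filter fun x => G.Adj v x).card := by
        simp only [Finset.card_filter]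
        exact Finset.sum_comm
      have h3 : ∑ v ∈ T, R.card ≤ ∑ v ∈ T, 20 * (R.filter fun x => G.Adj v x).card :=
        Finset.sum_le_sum fun v _ => h v
      rw [← Finset.mul_sum] at h1 h3
      rw [h2] at h1
      simp only [Finset.sum_const, smul_eq_mul] at h1 h3
      rw [mul_comm] at h3
      omega
    obtain ⟨x, hxR, hx⟩ := hex
    refine ⟨insert x X, Finset.insert_subset hxR hXR,
      (Finset.card_insert_le _ _).trans (by omega), ?_⟩
    have h4 : (A.filter fun v => ∀ y ∈ insert x X, ¬ G.Adj v y) = T.filter fun v => ¬ G.Adj v x := by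
      ext v
      simp only [hT, Finset.mem_filter, Finset.mem_insert, forall_eq_or_imp]
      tauto
    have h5 := Finset.card_filter_add_card_filter_not (s := T) (fun v => G.Adj v x)
    rw [h4, pow_succ, pow_succ]
    have h6 : 20 * (T.filter fun v => ¬ G.Adj v x).card ≤ 19 * T.card := by omega
    calc 20 ^ l * 20 * (T.filter fun v => ¬ G.Adj v x).card
        = 20 ^ l * (20 * (T.filter fun v => ¬ G.Adj v x).card) := by ring
      _ ≤ 20 ^ l * (19 * T.card) := Nat.mul_le_mul_left _ h6
      _ = 19 * (20 ^ l * T.card) := by ring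
      _ ≤ 19 * (19 ^ l * A.card) := Nat.mul_le_mul_left _ hX
      _ = 19 ^ l * 19 * A.card := by ring

open Classical in
/-- When any two vertices have many common neighbours in `R`, a greedy dominating set becomes
connected by adding, for each of its vertices, a common neighbour with a fixed vertex `x₀`. -/
theorem exists_connected_dominating {V : Type} (G : SimpleGraph V) (A R : Finset V)
    (hA : A.Nonempty) (hR : R.Nonempty)
    (h : ∀ u v, R.card ≤ 20 * (R.filter fun x => G.Adj u x ∧ G.Adj v x).card) (l : ℕ)
    (hl : 19 ^ l * A.card < 20 ^ l) :
    ∃ Z ⊆ R, Z.card ≤ 2 * l ∧ (G.induce (Z : Set V)).Connected ∧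
      ∀ v ∈ A, ∃ z ∈ Z, G.Adj z v := by
  obtain ⟨X, hXR, hXl, hX⟩ := exists_dominating G A R hR (fun v => by simpa using h v v) l
  have hdom : ∀ v ∈ A, ∃ x ∈ X, G.Adj v x := by
    by_contra hcon
    push Not at hcon
    obtain ⟨v, hv, hvX⟩ := hcon
    have : 1 ≤ (A.filter fun v => ∀ x ∈ X, ¬ G.Adj v x).card :=
      Finset.card_pos.2 ⟨v, Finset.mem_filter.2 ⟨hv, hvX⟩⟩
    have := Nat.mul_le_mul_left (20 ^ l) this
    omega
  obtain ⟨v₀, hv₀⟩ := hA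
  obtain ⟨x₀, hx₀, -⟩ := hdom v₀ hv₀
  have hc : ∀ x, ∃ c ∈ R, G.Adj x₀ c ∧ G.Adj x c := by
    intro x
    have h1 := h x₀ x
    have h2 := Finset.card_pos.2 hR
    have : 0 < (R.filter fun c => G.Adj x₀ c ∧ G.Adj x c).card := by omega
    obtain ⟨c, hc⟩ := Finset.card_pos.1 this
    exact ⟨c, (Finset.mem_filter.1 hc).1, (Finset.mem_filter.1 hc).2⟩
  choose c hcR hc0 hcx using hc
  refine ⟨X ∪ X.image c, ?_, ?_, ?_, ?_⟩
  · refine Finset.union_subset hXR ?_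
    intro y hy
    obtain ⟨x, -, rfl⟩ := Finset.mem_image.1 hy
    exact hcR x
  · have h1 := Finset.card_union_le X (X.image c)
    have h2 := Finset.card_image_le (s := X) (f := c)
    omega
  · have h1 : (G.induce ({x₀} ∪ (X.image c : Set V))).Connected := by
      apply connected_attach _ _ _ (connected_induce_singleton G x₀)
      intro y hy
      obtain ⟨x, -, rfl⟩ := Finset.mem_image.1 (Finset.mem_coe.1 hy)
      exact ⟨x₀, rfl, hc0 x⟩
    have h2 := connected_attach G _ (X : Set V) h1 (fun x hx =>
      ⟨c x, Or.inr (Finset.mem_coe.2 (Finset.mem_image_of_mem c hx)), (hcx x).symm⟩)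
    have h3 : ({x₀} ∪ (X.image c : Set V)) ∪ (X : Set V) = ((X ∪ X.image c : Finset V) : Set V) := by
      ext y
      simp only [Set.mem_union, Set.mem_singleton_iff, Finset.mem_coe, Finset.mem_union]
      constructor
      · rintro ((rfl | h) | h)
        · exact Or.inl hx₀
        · exact Or.inr h
        · exact Or.inl h
      · rintro (h | h)
        · exact Or.inr h
        · exact Or.inl (Or.inr h)
    rwa [h3] at h2
  · intro v hv
    obtain ⟨x, hx, hvx⟩ := hdom v hv
    exact ⟨x, Finset.mem_union_left _ hx, hvx.symm⟩

open Classical in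
/-- Greedy choice of pairwise disjoint subsets `Z i` of `R` with prescribed properties, provided each
can be found after the removal of any `B` elements from `R`. -/
theorem exists_disjoint_choice {V ι : Type} [Fintype ι] (R : Finset V) (P : ι → Finset V → Prop)
    (b : ι → ℕ) (B : ℕ) (hB : ∑ i, b i ≤ B)
    (h : ∀ i, ∀ R' ⊆ R, R.card ≤ R'.card + B → ∃ Z ⊆ R', Z.card ≤ b i ∧ P i Z) :
    ∃ Z : ι → Finset V, (∀ i, Z i ⊆ R ∧ P i (Z i)) ∧ Pairwise fun i j => Disjoint (Z i) (Z j) := by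
  have key : ∀ s : Finset ι, ∃ Z : ι → Finset V, (∀ i ∈ s, Z i ⊆ R ∧ P i (Z i)) ∧
      (∀ i ∈ s, ∀ j ∈ s, i ≠ j → Disjoint (Z i) (Z j)) ∧
      (s.biUnion Z).card ≤ ∑ i ∈ s, b i := by
    intro s
    induction s using Finset.induction_on with
    | empty => exact ⟨fun _ => ∅, by simp, by simp, by simp⟩
    | insert i s hi ih =>
      obtain ⟨Z, h1, h2, h3⟩ := ih
      have hs : ∑ i ∈ s, b i ≤ B := (Finset.sum_le_univ_sum_of_nonneg fun _ => Nat.zero_le _).trans hB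
      obtain ⟨Z', hZ'R, hZ'b, hZ'P⟩ := h i (R \ s.biUnion Z) Finset.sdiff_subset (by
        have := Finset.le_card_sdiff (s.biUnion Z) R
        omega)
      have hne : ∀ j ∈ s, j ≠ i := fun j hj hji => hi (hji ▸ hj)
      have hdis : ∀ j ∈ s, Disjoint Z' (Z j) := by
        intro j hj
        refine Finset.disjoint_left.2 fun x hx hxj => ?_
        exact (Finset.mem_sdiff.1 (hZ'R hx)).2 (Finset.mem_biUnion.2 ⟨j, hj, hxj⟩)
      refine ⟨Function.update Z i Z', ?_, ?_, ?_⟩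
      · intro j hj
        rcases Finset.mem_insert.1 hj with rfl | hj
        · simp only [Function.update_self]
          exact ⟨hZ'R.trans Finset.sdiff_subset, hZ'P⟩
        · rw [Function.update_of_ne (hne j hj)]
          exact h1 j hj
      · intro j hj k hk hjk
        rcases Finset.mem_insert.1 hj with hj' | hj' <;>
          rcases Finset.mem_insert.1 hk with hk' | hk'
        · exact absurd (hj'.trans hk'.symm) hjk
        · rw [hj', Function.update_self, Function.update_of_ne (hne k hk')]
          exact hdis k hk'
        · rw [hk', Function.update_self, Function.update_of_ne (hne j hj')]
          exact (hdis j hj').symm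
        · rw [Function.update_of_ne (hne k hk'), Function.update_of_ne (hne j hj')]
          exact h2 j hj' k hk' hjk
      · rw [Finset.biUnion_insert, Finset.sum_insert hi, Function.update_self]
        refine (Finset.card_union_le _ _).trans ?_
        have : s.biUnion (Function.update Z i Z') = s.biUnion Z :=
          Finset.biUnion_congr rfl fun j hj => Function.update_of_ne (hne j hj) _ _
        rw [this]
        omega
  obtain ⟨Z, h1, h2, -⟩ := key Finset.univ
  exact ⟨Z, fun i => h1 i (Finset.mem_univ _),
    fun i j hij => h2 i (Finset.mem_univ _) j (Finset.mem_univ _) hij⟩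

/-! ### Random tuples of distinct elements -/

/-- Tuples of length `k` with distinct entries make up at least half of all tuples when `2k² ≤ w`. -/
theorem pow_le_two_mul_descFactorial (w k : ℕ) (h : 2 * k ^ 2 ≤ w) :
    w ^ k ≤ 2 * w.descFactorial k := by
  rcases Nat.eq_zero_or_pos k with rfl | hk
  · simp
  have hkw : k ≤ w := by nlinarith
  have hw : 0 < w := by omega
  have h1 : (w - k) ^ k ≤ w.descFactorial k :=
    (Nat.pow_le_pow_left (by omega) k).trans (Nat.pow_sub_le_descFactorial w k)
  have hw' : (0 : ℝ) < w := by exact_mod_cast hw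
  have hkw' : (k : ℝ) ≤ w := by exact_mod_cast hkw
  have h' : 2 * (k : ℝ) ^ 2 ≤ w := by exact_mod_cast h
  have h2 : 1 + (k : ℝ) * (-(k / w : ℝ)) ≤ (1 + -(k / w : ℝ)) ^ k := by
    apply one_add_mul_le_pow
    have : (k : ℝ) / w ≤ 1 := (div_le_one hw').2 hkw'
    linarith
  have h3 : (1 : ℝ) / 2 ≤ 1 + (k : ℝ) * (-(k / w : ℝ)) := by
    have : (k : ℝ) * (k / w) ≤ 1 / 2 := by
      rw [mul_div_assoc', div_le_iff₀ hw']
      nlinarith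
    linarith
  have h4 : (w : ℝ) ^ k * (1 + -(k / w : ℝ)) ^ k = ((w : ℝ) - k) ^ k := by
    rw [← mul_pow]
    congr 1
    field_simp
    ring
  have h5 : (w : ℝ) ^ k ≤ 2 * ((w : ℝ) - k) ^ k := by
    rw [← h4]
    have : (0 : ℝ) < (w : ℝ) ^ k := by positivity
    nlinarith
  have h6 : w ^ k ≤ 2 * (w - k) ^ k := by
    have : ((w - k : ℕ) : ℝ) = (w : ℝ) - k := by push_cast [hkw]; ring
    rw [← this] at h5
    exact_mod_cast h5
  omega

open Classical in
/-- A property of a fixed tuple of distinct elements holds after a uniformly random permutation with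
probability at most twice the probability that it holds for a uniformly random tuple. -/
theorem perm_average {W K : Type} [Fintype W] [Fintype K] (x : K ↪ W) (Q : (K → W) → Prop)
    (hk : 2 * Fintype.card K ^ 2 ≤ Fintype.card W) :
    (Finset.univ.filter fun σ : Equiv.Perm W => Q fun k => σ (x k)).card *
        Fintype.card W ^ Fintype.card K ≤
      2 * Fintype.card (Equiv.Perm W) * (Finset.univ.filter Q).card := by
  set N := (Finset.univ.filter fun σ : Equiv.Perm W => Q fun k => σ (x k)).card with hN
  have hsame : ∀ y : K ↪ W,
      (Finset.univ.filter fun σ : Equiv.Perm W => Q fun k => σ (y k)).card = N := by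
    intro y
    obtain ⟨τ, hτ⟩ : ∃ τ : Equiv.Perm W, ∀ k, τ (x k) = y k := by
      let e : Set.range x ≃ Set.range y :=
        (Equiv.ofInjective x x.injective).symm.trans (Equiv.ofInjective y y.injective)
      refine ⟨Equiv.extendSubtype e, fun k => ?_⟩
      rw [Equiv.extendSubtype_apply_of_mem e (x k) ⟨k, rfl⟩]
      have : (⟨x k, ⟨k, rfl⟩⟩ : Set.range x) = Equiv.ofInjective x x.injective k := rfl
      rw [this]
      change ((Equiv.ofInjective y y.injective) ((Equiv.ofInjective x x.injective).symm
        (Equiv.ofInjective x x.injective k)) : W) = y k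
      rw [Equiv.symm_apply_apply]
      rfl
    rw [hN]
    refine Finset.card_bij (fun σ _ => σ * τ) ?_ ?_ ?_
    · intro σ hσ
      simpa [hτ] using hσ
    · intro σ _ σ' _ h
      exact mul_right_cancel h
    · intro σ hσ
      refine ⟨σ * τ⁻¹, ?_, by simp⟩
      have : ∀ k, τ.symm (y k) = x k := fun k => by rw [← hτ]; simp
      simpa [this] using hσ
  have hinner : ∀ σ : Equiv.Perm W,
      (Finset.univ.filter fun y : K ↪ W => Q fun k => σ (y k)).card ≤ (Finset.univ.filter Q).card := by
    intro σ
    refine Finset.card_le_card_of_injOn (fun y k => σ (y k)) ?_ ?_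
    · intro y hy
      simpa using hy
    · intro y _ y' _ h
      ext k
      exact σ.injective (congrFun h k)
  have hcount : Fintype.card (K ↪ W) * N ≤
      Fintype.card (Equiv.Perm W) * (Finset.univ.filter Q).card := by
    calc Fintype.card (K ↪ W) * N
        = ∑ y : K ↪ W, (Finset.univ.filter fun σ : Equiv.Perm W => Q fun k => σ (y k)).card := by
          simp [hsame]
      _ = ∑ σ : Equiv.Perm W, (Finset.univ.filter fun y : K ↪ W => Q fun k => σ (y k)).card := by
          simp only [Finset.card_filter]
          exact Finset.sum_comm
      _ ≤ ∑ σ : Equiv.Perm W, (Finset.univ.filter Q).card := Finset.sum_le_sum fun σ _ => hinner σ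
      _ = _ := by simp
  have h1 := pow_le_two_mul_descFactorial (Fintype.card W) (Fintype.card K) hk
  rw [Fintype.card_embedding_eq] at hcount
  calc N * Fintype.card W ^ Fintype.card K
      ≤ N * (2 * (Fintype.card W).descFactorial (Fintype.card K)) := Nat.mul_le_mul_left _ h1
    _ = 2 * ((Fintype.card W).descFactorial (Fintype.card K) * N) := by ring
    _ ≤ 2 * (Fintype.card (Equiv.Perm W) * (Finset.univ.filter Q).card) :=
      Nat.mul_le_mul_left _ hcount
    _ = _ := by ring

/-! ### The reserve -/

open Classical in
/-- A Chernoff-type bound: few colourings with 50 colours use the colour `j` at most `q` times on a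
set of `125 q` elements. It is obtained by summing the weight `2 ^ (-#(X of colour j))`. -/
theorem coloring_count {V : Type} [Fintype V] (X : Finset V) (j : Fin 50) (q : ℕ)
    (hX : 125 * q ≤ X.card) :
    ((Finset.univ.filter fun c : V → Fin 50 => (X.filter fun v => c v = j).card ≤ q).card : ℝ) ≤
      50 ^ Fintype.card V * (3 / 5 : ℝ) ^ q := by
  let g : V → Fin 50 → ℝ := fun v i => if v ∈ X ∧ i = j then 1 / 2 else 1
  have hsum : ∀ v, ∑ i, g v i = 50 * (if v ∈ X then 99 / 100 else 1 : ℝ) := by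
    intro v
    by_cases hv : v ∈ X
    · have : ∀ i, g v i = 1 - (if i = j then 1 / 2 else 0 : ℝ) := by
        intro i
        by_cases hi : i = j
        · simp only [g, hv, hi, and_self, if_true]; norm_num
        · simp only [g, hv, hi, and_false, if_false]; norm_num
      simp only [this, Finset.sum_sub_distrib, hv, if_true]
      simp
      norm_num
    · simp [g, hv]
  have hprod : ∀ c : V → Fin 50, ∏ v, g v (c v) = (1 / 2 : ℝ) ^ (X.filter fun v => c v = j).card := by
    intro c
    simp only [g]
    rw [Finset.prod_ite]
    simp only [Finset.prod_const, one_pow, mul_one]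
    congr 2
    ext v
    simp
  have htot : ∑ c : V → Fin 50, (1 / 2 : ℝ) ^ (X.filter fun v => c v = j).card =
      50 ^ Fintype.card V * (99 / 100 : ℝ) ^ X.card := by
    simp only [← hprod]
    rw [← Fintype.prod_sum]
    simp only [hsum]
    rw [Finset.prod_mul_distrib, Finset.prod_ite]
    simp [div_pow]
  have hlow : ((Finset.univ.filter fun c : V → Fin 50 => (X.filter fun v => c v = j).card ≤ q).card : ℝ)
      * (1 / 2) ^ q ≤ 50 ^ Fintype.card V * (99 / 100 : ℝ) ^ X.card := by
    rw [← htot, ← nsmul_eq_mul]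
    refine (Finset.card_nsmul_le_sum _ _ _ ?_).trans
      (Finset.sum_le_sum_of_subset_of_nonneg (Finset.filter_subset _ _) fun _ _ _ => by positivity)
    intro c hc
    exact pow_le_pow_of_le_one (by norm_num) (by norm_num) (Finset.mem_filter.1 hc).2
  have h99 : (99 / 100 : ℝ) ^ X.card ≤ (3 / 10) ^ q := by
    calc (99 / 100 : ℝ) ^ X.card ≤ (99 / 100 : ℝ) ^ (125 * q) :=
          pow_le_pow_of_le_one (by norm_num) (by norm_num) hX
      _ = ((99 / 100 : ℝ) ^ 125) ^ q := pow_mul _ _ _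
      _ ≤ _ := pow_le_pow_left₀ (by positivity) (by norm_num) q
  have h6 : (3 / 10 : ℝ) ^ q = (3 / 5) ^ q * (1 / 2) ^ q := by rw [← mul_pow]; norm_num
  have h2 : (0 : ℝ) < (1 / 2) ^ q := by positivity
  refine le_of_mul_le_mul_right (hlow.trans ?_) h2
  rw [mul_assoc, ← h6]
  exact mul_le_mul_of_nonneg_left h99 (by positivity)

/-- The union bound over all pairs of vertices and all 50 colours. -/
theorem reserve_numeric (n : ℕ) (hn : 10 ^ 9 ≤ n) :
    50 * (n : ℝ) ^ 2 * (3 / 5 : ℝ) ^ (n / 500) < 1 := by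
  set p := n / 2000 with hp
  have hq : 4 * p ≤ n / 500 := by omega
  have h1 : (3 / 5 : ℝ) ^ (n / 500) ≤ ((3 / 5 : ℝ) ^ p) ^ 4 := by
    rw [← pow_mul]
    exact pow_le_pow_of_le_one (by norm_num) (by norm_num) (by omega)
  have h2 : 1 + (p : ℝ) * (2 / 3) ≤ (1 + 2 / 3 : ℝ) ^ p := one_add_mul_le_pow (by norm_num) p
  have h3 : (n : ℝ) ≤ 3000 * p := by exact_mod_cast (by omega : n ≤ 3000 * p)
  have h4 : (3 / 5 : ℝ) ^ p * (1 + 2 / 3 : ℝ) ^ p = 1 := by rw [← mul_pow]; norm_num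
  have h5 : (0 : ℝ) < (3 / 5) ^ p := by positivity
  have h6 : (3 / 5 : ℝ) ^ p * (n / 4500) ≤ 1 := by
    rw [← h4]
    exact mul_le_mul_of_nonneg_left (by linarith) h5.le
  have hn' : (10 ^ 9 : ℝ) ≤ n := by exact_mod_cast hn
  set y := (3 / 5 : ℝ) ^ p
  have h7 : y * n ≤ 4500 := by linarith
  have h8 : 0 ≤ y * n := by positivity
  have h9 : y ≤ 4500 / 10 ^ 9 := by
    rw [le_div_iff₀ (by norm_num)]
    exact (mul_le_mul_of_nonneg_left hn' h5.le).trans h7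
  have h10 : (y * n) ^ 2 ≤ 4500 ^ 2 := pow_le_pow_left₀ h8 h7 2
  have h11 : y ^ 2 ≤ (4500 / 10 ^ 9) ^ 2 := pow_le_pow_left₀ h5.le h9 2
  calc 50 * (n : ℝ) ^ 2 * (3 / 5 : ℝ) ^ (n / 500) ≤ 50 * (n : ℝ) ^ 2 * y ^ 4 :=
        mul_le_mul_of_nonneg_left h1 (by positivity)
    _ = 50 * ((y * n) ^ 2 * y ^ 2) := by ring
    _ ≤ 50 * (4500 ^ 2 * (4500 / 10 ^ 9) ^ 2) := by gcongr
    _ < 1 := by norm_num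

open Classical in
/-- If any two vertices have at least `n / 4` common neighbours, some colour class of a random
colouring with 50 colours is a small set `R` containing at least `n / 500` common neighbours of any
two vertices. -/
theorem exists_reserve {V : Type} [Fintype V] (G : SimpleGraph V)
    (hn : 10 ^ 9 ≤ Fintype.card V)
    (h : ∀ u v, Fintype.card V ≤ 4 * (Finset.univ.filter fun x => G.Adj u x ∧ G.Adj v x).card) :
    ∃ R : Finset V, 50 * R.card ≤ Fintype.card V ∧
      ∀ u v, Fintype.card V ≤ 500 * (R.filter fun x => G.Adj u x ∧ G.Adj v x).card := by
  set n := Fintype.card V with hnV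
  set q := n / 500 with hq
  let N : V → V → Finset V := fun u v => Finset.univ.filter fun x => G.Adj u x ∧ G.Adj v x
  let Bad : V × V × Fin 50 → Finset (V → Fin 50) := fun p =>
    Finset.univ.filter fun c => ((N p.1 p.2.1).filter fun v => c v = p.2.2).card ≤ q
  have hc : ∃ c : V → Fin 50, ∀ p, c ∉ Bad p := by
    by_contra hcon
    push Not at hcon
    have h1 : (Finset.univ : Finset (V → Fin 50)) ⊆ Finset.univ.biUnion Bad := by
      intro c _
      obtain ⟨p, hp⟩ := hcon c
      exact Finset.mem_biUnion.2 ⟨p, Finset.mem_univ _, hp⟩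
    have h2 := (Finset.card_le_card h1).trans Finset.card_biUnion_le
    have h3 : ((∑ p, (Bad p).card : ℕ) : ℝ) ≤ ∑ p : V × V × Fin 50, 50 ^ n * (3 / 5 : ℝ) ^ q := by
      push_cast
      refine Finset.sum_le_sum fun p _ => coloring_count _ _ _ ?_
      have := h p.1 p.2.1
      change 125 * q ≤ (Finset.univ.filter fun x => G.Adj p.1 x ∧ G.Adj p.2.1 x).card
      omega
    have h4 : ((Finset.univ : Finset (V → Fin 50)).card : ℝ) = 50 ^ n := by
      simp [hnV]
    have h5 : (50 : ℝ) ^ n ≤ ∑ p : V × V × Fin 50, 50 ^ n * (3 / 5 : ℝ) ^ q := by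
      refine h4.symm.le.trans (le_trans (Nat.cast_le.2 h2) h3)
    have h6 := reserve_numeric n hn
    simp only [Finset.sum_const, Finset.card_univ, Fintype.card_prod, Fintype.card_fin,
      nsmul_eq_mul] at h5
    push_cast at h5
    rw [← hnV, ← hq] at *
    have h7 : (0 : ℝ) < 50 ^ n := by positivity
    nlinarith
  obtain ⟨c, hc⟩ := hc
  have hj : ∃ j : Fin 50, 50 * (Finset.univ.filter fun v => c v = j).card ≤ n := by
    by_contra hcon
    push Not at hcon
    have h1 : n = ∑ j, (Finset.univ.filter fun v => c v = j).card := by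
      rw [hnV, ← Finset.card_univ]
      exact Finset.card_eq_sum_card_fiberwise (fun _ _ => Finset.mem_coe.2 (Finset.mem_univ _))
    have h2 : ∑ j : Fin 50, n < ∑ j, 50 * (Finset.univ.filter fun v => c v = j).card :=
      Finset.sum_lt_sum_of_nonempty Finset.univ_nonempty fun j _ => hcon j
    rw [← Finset.mul_sum, ← h1] at h2
    simp at h2
  obtain ⟨j, hj⟩ := hj
  refine ⟨_, hj, fun u v => ?_⟩
  have h1 := hc (u, v, j)
  simp only [Bad, N, Finset.mem_filter, Finset.mem_univ, true_and, not_le] at h1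
  rw [Finset.filter_comm]
  omega

/-! ### Random blocks -/

open Classical in
/-- A random `a`-tuple has more than `200 μ ^ a w` common non-neighbours with probability at most
`1 / 200`, by Markov's inequality. -/
theorem count_bad_tuples {W : Type} [Fintype W] (r : W → W → Prop) (μ : ℝ) (hμ : 0 < μ)
    (h : ∀ v, ((Finset.univ.filter fun u => ¬ r v u).card : ℝ) ≤ μ * Fintype.card W)
    (a : ℕ) (hw : 0 < Fintype.card W) :
    200 * ((Finset.univ.filter fun x : Fin a → W =>
      ¬ (((Finset.univ.filter fun v => ∀ p, ¬ r v (x p)).card : ℝ) ≤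
        200 * μ ^ a * Fintype.card W)).card : ℝ) ≤ (Fintype.card W : ℝ) ^ a := by
  set w := Fintype.card W with hwW
  have hw' : (0 : ℝ) < w := by exact_mod_cast hw
  set Bad := Finset.univ.filter fun x : Fin a → W =>
      ¬ (((Finset.univ.filter fun v => ∀ p, ¬ r v (x p)).card : ℝ) ≤ 200 * μ ^ a * w) with hBad
  have h1 : ∑ x : Fin a → W, (Finset.univ.filter fun v => ∀ p, ¬ r v (x p)).card =
      ∑ v, (Finset.univ.filter fun u => ¬ r v u).card ^ a := by
    have : ∀ v, (Finset.univ.filter fun u => ¬ r v u).card ^ a =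
        (Finset.univ.filter fun x : Fin a → W => ∀ p, ¬ r v (x p)).card := by
      intro v
      rw [← Fintype.card_piFinset_const]
      congr 1
      ext x
      simp [Fintype.mem_piFinset]
    refine Eq.trans ?_ (Finset.sum_congr rfl fun v _ => (this v).symm)
    simp only [Finset.card_filter]
    exact Finset.sum_comm
  have h2 : ((∑ v, (Finset.univ.filter fun u => ¬ r v u).card ^ a : ℕ) : ℝ) ≤ w * (μ * w) ^ a := by
    push_cast
    calc _ ≤ ∑ _v : W, (μ * w) ^ a :=
          Finset.sum_le_sum fun v _ => pow_le_pow_left₀ (by positivity) (h v) a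
      _ = _ := by simp [hwW]
  have h3 : (Bad.card : ℝ) * (200 * μ ^ a * w) ≤
      ((∑ x : Fin a → W, (Finset.univ.filter fun v => ∀ p, ¬ r v (x p)).card : ℕ) : ℝ) := by
    push_cast
    rw [← nsmul_eq_mul]
    refine (Finset.card_nsmul_le_sum _ _ _ ?_).trans
      (Finset.sum_le_sum_of_subset_of_nonneg (Finset.subset_univ _) fun _ _ _ => by positivity)
    intro x hx
    exact (not_le.1 (Finset.mem_filter.1 hx).2).le
  rw [h1] at h3
  have h4 := h3.trans h2
  have h5 : (0 : ℝ) < μ ^ a * w := by positivity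
  refine le_of_mul_le_mul_right ?_ h5
  rw [mul_pow] at h4
  linarith

open Classical in
/-- Among pairs of `a`-tuples, few consist of a tuple with at most `200 μ ^ a w` common non-neighbours
and a tuple made of such common non-neighbours. -/
theorem count_nonadj_tuples {W : Type} [Fintype W] (r : W → W → Prop) (μ : ℝ) (hμ : 0 < μ)
    (a : ℕ) :
    ((Finset.univ.filter fun z : Fin a ⊕ Fin a → W =>
      ((Finset.univ.filter fun v => ∀ p, ¬ r v (z (Sum.inl p))).card : ℝ) ≤
        200 * μ ^ a * Fintype.card W ∧ ∀ p q, ¬ r (z (Sum.inr q)) (z (Sum.inl p))).card : ℝ) ≤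
      (200 * μ ^ a) ^ a * (Fintype.card W : ℝ) ^ (2 * a) := by
  set w := Fintype.card W with hwW
  set N : (Fin a → W) → Finset W := fun x => Finset.univ.filter fun v => ∀ p, ¬ r v (x p) with hN
  set Good := Finset.univ.filter fun x : Fin a → W => ((N x).card : ℝ) ≤ 200 * μ ^ a * w with hGood
  have h1 : (Finset.univ.filter fun z : Fin a ⊕ Fin a → W =>
      ((Finset.univ.filter fun v => ∀ p, ¬ r v (z (Sum.inl p))).card : ℝ) ≤
        200 * μ ^ a * w ∧ ∀ p q, ¬ r (z (Sum.inr q)) (z (Sum.inl p))).card ≤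
      (Good.sigma fun x => Fintype.piFinset fun _ : Fin a => N x).card := by
    refine Finset.card_le_card_of_injOn
      (fun z => ⟨fun p => z (Sum.inl p), fun q => z (Sum.inr q)⟩) ?_ ?_
    · intro z hz
      have hz := (Finset.mem_filter.1 hz).2
      simp only [Finset.coe_sigma, Set.mem_sigma_iff, Finset.mem_coe]
      refine ⟨Finset.mem_filter.2 ⟨Finset.mem_univ _, hz.1⟩, ?_⟩
      rw [Fintype.mem_piFinset]
      exact fun q => Finset.mem_filter.2 ⟨Finset.mem_univ _, fun p => hz.2 p q⟩
    · intro z _ z' _ hzz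
      simp only [Sigma.mk.injEq, heq_eq_eq] at hzz
      funext k
      rcases k with p | q
      · exact congrFun hzz.1 p
      · exact congrFun hzz.2 q
  refine (Nat.cast_le.2 h1).trans ?_
  rw [Finset.card_sigma]
  push_cast
  simp only [Fintype.card_piFinset_const]
  calc ∑ x ∈ Good, (((N x).card ^ a : ℕ) : ℝ) ≤ ∑ x ∈ Good, (200 * μ ^ a * w) ^ a := by
        refine Finset.sum_le_sum fun x hx => ?_
        push_cast
        exact pow_le_pow_left₀ (by positivity) (Finset.mem_filter.1 hx).2 a
    _ = Good.card * (200 * μ ^ a * w) ^ a := by simp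
    _ ≤ (w : ℝ) ^ a * (200 * μ ^ a * w) ^ a := by
        refine mul_le_mul_of_nonneg_right ?_ (by positivity)
        have : Good.card ≤ w ^ a := by
          refine (Finset.card_le_univ _).trans ?_
          simp [hwW]
        exact_mod_cast this
    _ = _ := by rw [mul_pow, two_mul, pow_add]; ring

open Classical in
/-- Cut a random permutation of `W` into `τ` blocks of size `a`, discard the blocks having too many
common non-neighbours, and keep `t` of the others. Since few pairs of blocks are expected to have no edge
between them, some permutation makes all this work. -/
theorem exists_blocks {W : Type} [Fintype W] (r : W → W → Prop) (μ : ℝ) (hμ : 0 < μ)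
    (h : ∀ v, ((Finset.univ.filter fun u => ¬ r v u).card : ℝ) ≤ μ * Fintype.card W)
    (a τ t : ℕ) (ha : 0 < a) (haw : 8 * a ^ 2 ≤ Fintype.card W) (hτ : τ * a ≤ Fintype.card W)
    (ht : 50 * t ≤ 49 * τ) (hτ0 : 0 < τ) :
    ∃ A : Fin t → Finset W, (∀ i, (A i).card = a) ∧ (Pairwise fun i j => Disjoint (A i) (A j)) ∧
      ((Finset.univ.filter fun p : Fin t × Fin t => p.1 ≠ p.2 ∧
        ∀ u ∈ A p.1, ∀ v ∈ A p.2, ¬ r v u).card : ℝ) ≤ 4 * (200 * μ ^ a) ^ a * τ ^ 2 := by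
  set w := Fintype.card W with hwW
  have hw : 0 < w := by nlinarith
  have hw' : (0 : ℝ) < w := by exact_mod_cast hw
  have hτ' : (0 : ℝ) < τ := by exact_mod_cast hτ0
  set ρ : ℝ := (200 * μ ^ a) ^ a with hρ
  have hρ0 : 0 < ρ := by positivity
  obtain ⟨e⟩ : Nonempty (Fin τ × Fin a ↪ W) :=
    Function.Embedding.nonempty_of_card_le (by simpa using hτ)
  let Good : (Fin a → W) → Prop := fun x =>
    ((Finset.univ.filter fun v => ∀ p, ¬ r v (x p)).card : ℝ) ≤ 200 * μ ^ a * w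
  let bl : Equiv.Perm W → Fin τ → Fin a → W := fun σ i p => σ (e (i, p))
  let P : ℝ := Fintype.card (Equiv.Perm W)
  have hP : 0 < P := by
    have : 0 < Fintype.card (Equiv.Perm W) := Fintype.card_pos
    simpa [P] using this
  have c1 : ∀ i, 100 * ((Finset.univ.filter fun σ => ¬ Good (bl σ i)).card : ℝ) ≤ P := by
    intro i
    have h1 := perm_average (W := W) (K := Fin a)
      ⟨fun p => e (i, p), fun p q hpq => by simpa using hpq⟩ (fun x => ¬ Good x)
      (by simp only [Fintype.card_fin]; omega)
    have h2 := count_bad_tuples r μ hμ h a hw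
    have h1' : ((Finset.univ.filter fun σ => ¬ Good (bl σ i)).card : ℝ) * (w : ℝ) ^ a ≤
        2 * P * ((Finset.univ.filter fun x : Fin a → W => ¬ Good x).card : ℝ) := by
      simp only [Fintype.card_fin] at h1
      have h1 := (Nat.cast_le (α := ℝ)).2 h1
      push_cast at h1
      convert h1 <;> rfl
    have h3 : (0 : ℝ) < (w : ℝ) ^ a := by positivity
    refine le_of_mul_le_mul_right ?_ h3
    calc _ = 100 * (((Finset.univ.filter fun σ => ¬ Good (bl σ i)).card : ℝ) * (w : ℝ) ^ a) := by ring
      _ ≤ 100 * (2 * P * ((Finset.univ.filter fun x : Fin a → W => ¬ Good x).card : ℝ)) := by gcongr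
      _ = P * (200 * ((Finset.univ.filter fun x : Fin a → W => ¬ Good x).card : ℝ)) := by ring
      _ ≤ _ := mul_le_mul_of_nonneg_left h2 hP.le
  have c2 : ∀ i j, i ≠ j → ((Finset.univ.filter fun σ => Good (bl σ i) ∧
      ∀ p q, ¬ r (bl σ j q) (bl σ i p)).card : ℝ) ≤ 2 * ρ * P := by
    intro i j hij
    have h1 := perm_average (W := W) (K := Fin a ⊕ Fin a)
      ⟨Sum.elim (fun p => e (i, p)) (fun p => e (j, p)), by
        rintro (p | p) (q | q) hpq <;> simp at hpq ⊢ <;> tauto⟩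
      (fun z => Good (fun p => z (Sum.inl p)) ∧ ∀ p q, ¬ r (z (Sum.inr q)) (z (Sum.inl p)))
      (by simp only [Fintype.card_fin, Fintype.card_sum]; nlinarith)
    have h2 := count_nonadj_tuples r μ hμ a
    have h1' : ((Finset.univ.filter fun σ => Good (bl σ i) ∧
        ∀ p q, ¬ r (bl σ j q) (bl σ i p)).card : ℝ) * (w : ℝ) ^ (2 * a) ≤
        2 * P * ((Finset.univ.filter fun z : Fin a ⊕ Fin a → W => Good (fun p => z (Sum.inl p)) ∧
          ∀ p q, ¬ r (z (Sum.inr q)) (z (Sum.inl p))).card : ℝ) := by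
      simp only [Fintype.card_fin, Fintype.card_sum, ← two_mul] at h1
      have h1 := (Nat.cast_le (α := ℝ)).2 h1
      push_cast at h1
      convert h1 <;> rfl
    have h3 : (0 : ℝ) < (w : ℝ) ^ (2 * a) := by positivity
    refine le_of_mul_le_mul_right (h1'.trans ?_) h3
    calc _ ≤ 2 * P * (ρ * (w : ℝ) ^ (2 * a)) := mul_le_mul_of_nonneg_left h2 (by positivity)
      _ = _ := by ring
  let nb : Equiv.Perm W → ℕ := fun σ => (Finset.univ.filter fun i => ¬ Good (bl σ i)).card
  let nn : Equiv.Perm W → ℕ := fun σ => (Finset.univ.filter fun p : Fin τ × Fin τ => p.1 ≠ p.2 ∧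
    Good (bl σ p.1) ∧ ∀ k q, ¬ r (bl σ p.2 q) (bl σ p.1 k)).card
  have s1 : 100 * ∑ σ, (nb σ : ℝ) ≤ τ * P := by
    have : ∑ σ, nb σ = ∑ i, (Finset.univ.filter fun σ => ¬ Good (bl σ i)).card := by
      simp only [nb, Finset.card_filter]
      exact Finset.sum_comm
    have h2 : ∑ σ, (nb σ : ℝ) = ∑ i, ((Finset.univ.filter fun σ => ¬ Good (bl σ i)).card : ℝ) := by
      exact_mod_cast this
    rw [h2, Finset.mul_sum]
    refine (Finset.sum_le_sum fun i _ => c1 i).trans ?_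
    simp
  have s2 : ∑ σ, (nn σ : ℝ) ≤ τ ^ 2 * (2 * ρ * P) := by
    have : ∑ σ, nn σ = ∑ p : Fin τ × Fin τ, (Finset.univ.filter fun σ => p.1 ≠ p.2 ∧
        Good (bl σ p.1) ∧ ∀ k q, ¬ r (bl σ p.2 q) (bl σ p.1 k)).card := by
      simp only [nn, Finset.card_filter]
      exact Finset.sum_comm
    have h2 : ∑ σ, (nn σ : ℝ) = ∑ p : Fin τ × Fin τ, ((Finset.univ.filter fun σ => p.1 ≠ p.2 ∧
        Good (bl σ p.1) ∧ ∀ k q, ¬ r (bl σ p.2 q) (bl σ p.1 k)).card : ℝ) := by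
      exact_mod_cast this
    rw [h2]
    calc _ ≤ ∑ p : Fin τ × Fin τ, 2 * ρ * P := by
          refine Finset.sum_le_sum fun p _ => ?_
          by_cases hp : p.1 = p.2
          · simp only [hp, ne_eq, not_true_eq_false, false_and, Finset.filter_false,
              Finset.card_empty, Nat.cast_zero]
            positivity
          · refine le_trans (Nat.cast_le.2 (Finset.card_le_card ?_)) (c2 p.1 p.2 hp)
            intro σ hσ
            exact Finset.mem_filter.2 ⟨Finset.mem_univ _, (Finset.mem_filter.1 hσ).2.2⟩
      _ = _ := by
          rw [Finset.sum_const, nsmul_eq_mul, Finset.card_univ, Fintype.card_prod,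
            Fintype.card_fin]
          push_cast
          ring
  obtain ⟨σ, hσ⟩ : ∃ σ, 100 * (nb σ : ℝ) * (2 * τ * ρ) + nn σ ≤ 4 * τ ^ 2 * ρ := by
    have : ∑ σ : Equiv.Perm W, (100 * (nb σ : ℝ) * (2 * τ * ρ) + nn σ) ≤
        ∑ σ : Equiv.Perm W, 4 * τ ^ 2 * ρ := by
      rw [Finset.sum_add_distrib, ← Finset.sum_mul, ← Finset.mul_sum]
      have h3 : (100 * ∑ σ, (nb σ : ℝ)) * (2 * τ * ρ) ≤ τ * P * (2 * τ * ρ) :=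
        mul_le_mul_of_nonneg_right s1 (by positivity)
      have h4 : ∑ σ : Equiv.Perm W, 4 * (τ : ℝ) ^ 2 * ρ = P * (4 * τ ^ 2 * ρ) := by
        rw [Finset.sum_const, nsmul_eq_mul, Finset.card_univ]
      rw [h4]
      linarith
    obtain ⟨σ, -, hσ⟩ := Finset.exists_le_of_sum_le Finset.univ_nonempty this
    exact ⟨σ, hσ⟩
  have hnn : (nn σ : ℝ) ≤ 4 * τ ^ 2 * ρ := by
    have : 0 ≤ 100 * (nb σ : ℝ) * (2 * τ * ρ) := by positivity
    linarith
  have hnb : 50 * nb σ ≤ τ := by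
    have h1 : (50 * (nb σ : ℝ)) * (4 * τ * ρ) ≤ τ * (4 * τ * ρ) := by
      have : (0 : ℝ) ≤ nn σ := by positivity
      linarith
    have := le_of_mul_le_mul_right h1 (by positivity)
    exact_mod_cast this
  set T := Finset.univ.filter fun i => Good (bl σ i) with hT
  have hTc : t ≤ T.card := by
    have : T.card + nb σ = τ := by
      have := Finset.card_filter_add_card_filter_not (s := (Finset.univ : Finset (Fin τ)))
        (fun i => Good (bl σ i))
      simpa [T, nb] using this
    omega
  obtain ⟨f⟩ : Nonempty (Fin t ↪ T) :=
    Function.Embedding.nonempty_of_card_le (by simpa using hTc)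
  have binj : ∀ i j p q, bl σ i p = bl σ j q → i = j ∧ p = q := by
    intro i j p q hpq
    have := e.injective (σ.injective hpq)
    simpa using this
  refine ⟨fun i => Finset.univ.image (bl σ (f i)), ?_, ?_, ?_⟩
  · intro i
    rw [Finset.card_image_of_injective _ fun p q hpq => (binj _ _ p q hpq).2]
    simp
  · intro i j hij
    refine Finset.disjoint_left.2 fun x hx hx' => ?_
    obtain ⟨p, -, rfl⟩ := Finset.mem_image.1 hx
    obtain ⟨q, -, hq⟩ := Finset.mem_image.1 hx'
    exact hij (f.injective (Subtype.ext (binj _ _ _ _ hq).1.symm))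
  · have : (Finset.univ.filter fun p : Fin t × Fin t => p.1 ≠ p.2 ∧
        ∀ u ∈ Finset.univ.image (bl σ (f p.1)), ∀ v ∈ Finset.univ.image (bl σ (f p.2)),
          ¬ r v u).card ≤ nn σ := by
      refine Finset.card_le_card_of_injOn (fun p => (((f p.1) : Fin τ), ((f p.2) : Fin τ))) ?_ ?_
      · intro p hp
        have hp := (Finset.mem_filter.1 hp).2
        refine Finset.mem_coe.2 (Finset.mem_filter.2 ⟨Finset.mem_univ _, ?_, ?_, ?_⟩)
        · exact fun hh => hp.1 (f.injective (Subtype.ext hh))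
        · exact (Finset.mem_filter.1 (f p.1).2).2
        · exact fun k q => hp.2 _ (Finset.mem_image_of_mem _ (Finset.mem_univ _)) _
            (Finset.mem_image_of_mem _ (Finset.mem_univ _))
      · intro p _ p' _ hpp
        simp only [Prod.mk.injEq] at hpp
        exact Prod.ext (f.injective (Subtype.ext hpp.1)) (f.injective (Subtype.ext hpp.2))
    refine (Nat.cast_le.2 this).trans (hnn.trans (le_of_eq (by ring)))

/-! ### Placing the vertices of `H` and connecting the blocks -/

open Classical in
/-- Averaging over all bijections between the vertices of `H` and the blocks, some bijection sends
few edges of `H` to bad pairs of blocks. Edges are counted as ordered pairs. -/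
theorem exists_placement {X Y : Type} [Fintype X] [Fintype Y]
    (hX : Fintype.card X = Fintype.card Y) (ht : 8 ≤ Fintype.card Y)
    (H : SimpleGraph X) (Bad : Y → Y → Prop) :
    ∃ π : X ≃ Y,
      (Finset.univ.filter fun p : X × X => H.Adj p.1 p.2 ∧ Bad (π p.1) (π p.2)).card * Fintype.card Y ^ 2 ≤
        2 * (Finset.univ.filter fun p : X × X => H.Adj p.1 p.2).card *
          (Finset.univ.filter fun p : Y × Y => p.1 ≠ p.2 ∧ Bad p.1 p.2).card := by
  let e : X ≃ Y := Fintype.equivOfCardEq hX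
  set E := Finset.univ.filter fun p : X × X => H.Adj p.1 p.2 with hE
  set β := (Finset.univ.filter fun p : Y × Y => p.1 ≠ p.2 ∧ Bad p.1 p.2).card with hβ
  let N : Equiv.Perm (Y) → ℕ := fun σ => (E.filter fun p => Bad (σ (e p.1)) (σ (e p.2))).card
  have h1 : ∀ p ∈ E, (Finset.univ.filter fun σ : Equiv.Perm (Y) =>
      Bad (σ (e p.1)) (σ (e p.2))).card * Fintype.card Y ^ 2 ≤ 2 * Fintype.card (Equiv.Perm (Y)) * β := by
    intro p hp
    have hne : e p.1 ≠ e p.2 := fun h => (Finset.mem_filter.1 hp).2.ne (e.injective h)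
    obtain ⟨f, hf0, hf1⟩ : ∃ f : Fin 2 ↪ Y, f 0 = e p.1 ∧ f 1 = e p.2 := by
      refine ⟨⟨![e p.1, e p.2], ?_⟩, rfl, rfl⟩
      intro i j hij
      fin_cases i <;> fin_cases j <;> simp_all
    let Q : (Fin 2 → Y) → Prop := fun z => z 0 ≠ z 1 ∧ Bad (z 0) (z 1)
    have h2 := perm_average f Q (by simp only [Fintype.card_fin]; omega)
    have h3 : (Finset.univ.filter Q).card ≤ β := by
      refine Finset.card_le_card_of_injOn (fun z => (z 0, z 1)) ?_ ?_
      · intro z hz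
        exact Finset.mem_coe.2 (Finset.mem_filter.2
          ⟨Finset.mem_univ _, (Finset.mem_filter.1 (Finset.mem_coe.1 hz)).2⟩)
      · intro z _ z' _ h
        simp only [Prod.mk.injEq] at h
        funext k
        fin_cases k
        · exact h.1
        · exact h.2
    have h4 : (Finset.univ.filter fun σ : Equiv.Perm (Y) =>
        Bad (σ (e p.1)) (σ (e p.2))).card ≤ (Finset.univ.filter fun σ : Equiv.Perm (Y) =>
        Q fun k => σ (f k)).card := by
      refine Finset.card_le_card fun σ hσ => ?_
      refine Finset.mem_filter.2 ⟨Finset.mem_univ _, ?_, ?_⟩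
      · change σ (f 0) ≠ σ (f 1)
        rw [hf0, hf1]
        exact fun h => hne (σ.injective h)
      · change Bad (σ (f 0)) (σ (f 1))
        rw [hf0, hf1]
        exact (Finset.mem_filter.1 hσ).2
    simp only [Fintype.card_fin] at h2
    have h2' : (Finset.univ.filter fun σ : Equiv.Perm Y => Q fun k => σ (f k)).card *
        Fintype.card Y ^ 2 ≤ 2 * Fintype.card (Equiv.Perm Y) * (Finset.univ.filter Q).card := by
      convert h2
    exact (Nat.mul_le_mul_right _ h4).trans (h2'.trans (Nat.mul_le_mul_left _ h3))
  have hsum : ∑ σ, N σ = ∑ p ∈ E, (Finset.univ.filter fun σ : Equiv.Perm (Y) =>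
      Bad (σ (e p.1)) (σ (e p.2))).card := by
    simp only [N, Finset.card_filter]
    exact Finset.sum_comm
  have h5 : ∑ σ : Equiv.Perm (Y), N σ * Fintype.card Y ^ 2 ≤ ∑ _σ : Equiv.Perm (Y), 2 * E.card * β := by
    rw [← Finset.sum_mul, hsum, Finset.sum_mul]
    refine (Finset.sum_le_sum h1).trans (le_of_eq ?_)
    simp only [Finset.sum_const, smul_eq_mul, Finset.card_univ]
    ring
  obtain ⟨σ, -, hσ⟩ := Finset.exists_le_of_sum_le Finset.univ_nonempty h5
  refine ⟨e.trans σ, ?_⟩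
  have hEσ : (Finset.univ.filter fun p : X × X => H.Adj p.1 p.2 ∧
      Bad ((e.trans σ) p.1) ((e.trans σ) p.2)).card = N σ := by
    simp only [N, hE, Finset.filter_filter]
    rfl
  rw [hEσ]
  exact hσ

open Classical in
/-- The number of ordered adjacent pairs is the average degree times the order. -/
theorem card_adj_pairs {X : Type} [Fintype X] (H : SimpleGraph X) (hX : 0 < Fintype.card X) :
    ((Finset.univ.filter fun p : X × X => H.Adj p.1 p.2).card : ℝ) =
      avgDeg H * Fintype.card X := by
  have h1 : (Finset.univ.filter fun p : X × X => H.Adj p.1 p.2).card = 2 * Nat.card H.edgeSet := by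
    rw [← sum_ncard_neighborSet, Finset.card_filter, Fintype.sum_prod_type]
    refine Finset.sum_congr rfl fun v _ => ?_
    rw [← Finset.card_filter, ← Set.ncard_coe_finset]
    congr 1
    ext x
    simp
  have h2 : (0 : ℝ) < Fintype.card X := by exact_mod_cast hX
  rw [h1, avgDeg, Nat.card_eq_fintype_card (α := X)]
  field_simp
  push_cast
  ring

open Classical in
/-- Completing blocks to branch sets inside the reserve `R`: each vertex of `S` receives a connected
set dominating the whole graph, every other vertex `u` a connected set dominating its block `A u`,
and each pair `(u, v)` in `P` a single vertex adjacent to both blocks, which is added to the branch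
set of `u`. -/
theorem hasMinor_of_blocks {V U : Type} [Fintype V] [Fintype U] (G : SimpleGraph V)
    (H : SimpleGraph U) (S : Finset U) (R : Finset V) (A : U → Finset V) (P : Finset (U × U))
    (a ls la B : ℕ) (hV : 0 < Fintype.card V) (ha : 0 < a)
    (hA : ∀ u ∉ S, (A u).card = a)
    (hAd : Pairwise fun u v => Disjoint (A u) (A v)) (hAR : ∀ u, Disjoint (A u) R)
    (hPS : ∀ p ∈ P, p.1 ∉ S ∧ p.2 ∉ S)
    (hP : ∀ u v, H.Adj u v → u ∉ S → v ∉ S → (u, v) ∉ P → ∃ x ∈ A u, ∃ y ∈ A v, G.Adj x y)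
    (hls : 19 ^ ls * Fintype.card V < 20 ^ ls) (hla : 19 ^ la * a < 20 ^ la)
    (hB : S.card * (2 * ls) + Sᶜ.card * (2 * la) + P.card ≤ B)
    (hBV : 1000 * B ≤ Fintype.card V) (hRV : 50 * R.card ≤ Fintype.card V)
    (hR : ∀ u v, Fintype.card V ≤ 500 * (R.filter fun x => G.Adj u x ∧ G.Adj v x).card) :
    HasMinor G H := by
  let Pr : U ⊕ P → Finset V → Prop := fun i Z => match i with
    | Sum.inl u => (G.induce (Z : Set V)).Connected ∧ (u ∈ S → ∀ v, ∃ z ∈ Z, G.Adj z v) ∧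
        ∀ v ∈ A u, ∃ z ∈ Z, G.Adj z v
    | Sum.inr p => ∃ w, Z = {w} ∧ (∃ x ∈ A p.1.1, G.Adj x w) ∧ ∃ y ∈ A p.1.2, G.Adj w y
  let b : U ⊕ P → ℕ := Sum.elim (fun u => if u ∈ S then 2 * ls else 2 * la) (fun _ => 1)
  have hb : ∑ i, b i ≤ B := by
    have h1 : (Finset.univ.filter fun u => u ∈ S) = S := by ext; simp
    have h2 : (Finset.univ.filter fun u => u ∉ S) = Sᶜ := by ext; simp
    rw [Fintype.sum_sum_type]
    simp only [b, Sum.elim_inl, Sum.elim_inr, Finset.sum_ite, h1, h2]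
    simp only [Finset.sum_const, smul_eq_mul, mul_one, Finset.card_univ, Fintype.card_coe]
    exact hB
  have hchoice : ∀ i, ∀ R' ⊆ R, R.card ≤ R'.card + B → ∃ Z ⊆ R', Z.card ≤ b i ∧ Pr i Z := by
    intro i R' hR'R hR'
    have hcom : ∀ u v, R'.card ≤ 20 * (R'.filter fun x => G.Adj u x ∧ G.Adj v x).card ∧
        0 < (R'.filter fun x => G.Adj u x ∧ G.Adj v x).card := by
      intro u v
      have h1 := hR u v
      have h2 : (R.filter fun x => G.Adj u x ∧ G.Adj v x) ⊆
          (R'.filter fun x => G.Adj u x ∧ G.Adj v x) ∪ (R \ R') := by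
        intro x hx
        by_cases hxR : x ∈ R'
        · exact Finset.mem_union_left _ (Finset.mem_filter.2 ⟨hxR, (Finset.mem_filter.1 hx).2⟩)
        · exact Finset.mem_union_right _ (Finset.mem_sdiff.2 ⟨(Finset.mem_filter.1 hx).1, hxR⟩)
      have h3 := (Finset.card_le_card h2).trans (Finset.card_union_le _ _)
      have h4 := Finset.card_sdiff_add_card_eq_card hR'R
      have h5 := Finset.card_le_card hR'R
      omega
    have hVne : Nonempty V := Fintype.card_pos_iff.1 hV
    have hR'ne : R'.Nonempty := by
      obtain ⟨v⟩ := hVne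
      obtain ⟨x, hx⟩ := Finset.card_pos.1 (hcom v v).2
      exact ⟨x, (Finset.mem_filter.1 hx).1⟩
    rcases i with u | p
    · by_cases hu : u ∈ S
      · obtain ⟨Z, h1, h2, h3, h4⟩ := exists_connected_dominating G Finset.univ R'
          (Finset.univ_nonempty) hR'ne (fun u v => (hcom u v).1) ls (by simpa using hls)
        refine ⟨Z, h1, by simpa [b, hu] using h2, h3, fun _ v => h4 v (Finset.mem_univ _), ?_⟩
        exact fun v _ => h4 v (Finset.mem_univ _)
      · have hAu := hA u hu
        obtain ⟨Z, h1, h2, h3, h4⟩ := exists_connected_dominating G (A u) R'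
          (Finset.card_pos.1 (by omega)) hR'ne (fun u v => (hcom u v).1) la (by rw [hAu]; exact hla)
        exact ⟨Z, h1, by simpa [b, hu] using h2, h3, fun h => absurd h hu, h4⟩
    · obtain ⟨hp1, hp2⟩ := hPS p.1 p.2
      have hc1 := hA _ hp1
      have hc2 := hA _ hp2
      obtain ⟨x, hx⟩ := Finset.card_pos.1 (by omega : 0 < (A p.1.1).card)
      obtain ⟨y, hy⟩ := Finset.card_pos.1 (by omega : 0 < (A p.1.2).card)
      obtain ⟨w, hw⟩ := Finset.card_pos.1 (hcom x y).2
      obtain ⟨hwR, hxw, hyw⟩ := Finset.mem_filter.1 hw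
      exact ⟨{w}, Finset.singleton_subset_iff.2 hwR, by simp [b], w, rfl, ⟨x, hx, hxw⟩,
        ⟨y, hy, hyw.symm⟩⟩
  obtain ⟨Z, hZ, hZd⟩ := exists_disjoint_choice R Pr b B hb hchoice
  let owner : U ⊕ P → U := Sum.elim id fun p => p.1.1
  let φ : U → Set V := fun u => {x | x ∈ A u ∨ ∃ i, owner i = u ∧ x ∈ Z i}
  have hconn : ∀ u, (G.induce (φ u)).Connected := by
    intro u
    obtain ⟨h1, -, h3⟩ := (hZ (Sum.inl u)).2
    have h4 := connected_attach G (Z (Sum.inl u) : Set V) (A u : Set V) h1 h3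
    have h5 := connected_attach G _ {x | ∃ p : P, p.1.1 = u ∧ x ∈ Z (Sum.inr p)} h4 (by
      rintro y ⟨p, rfl, hy⟩
      obtain ⟨w, hw, ⟨x, hx, hxw⟩, -⟩ := (hZ (Sum.inr p)).2
      rw [hw, Finset.mem_singleton] at hy
      exact ⟨x, Or.inr hx, hy ▸ hxw⟩)
    have h6 : φ u = ((Z (Sum.inl u) : Set V) ∪ (A u : Set V)) ∪
        {x | ∃ p : P, p.1.1 = u ∧ x ∈ Z (Sum.inr p)} := by
      ext x
      simp only [φ, owner, Set.mem_ofPred_eq, Sum.exists, Sum.elim_inl, Sum.elim_inr, id,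
        Set.mem_union, Finset.mem_coe, exists_eq_left]
      tauto
    rwa [h6]
  have hne : ∀ u, (φ u).Nonempty := by
    intro u
    obtain ⟨⟨x, hx⟩⟩ := (hconn u).nonempty
    exact ⟨x, hx⟩
  refine ⟨φ, hne, hconn, ?_, ?_⟩
  · intro u v huv
    refine Set.disjoint_left.2 ?_
    rintro x (hx | ⟨i, hi, hx⟩) (hx' | ⟨j, hj, hx'⟩)
    · exact Finset.disjoint_left.1 (hAd huv) hx hx'
    · exact Finset.disjoint_left.1 (hAR u) hx ((hZ j).1 hx')
    · exact Finset.disjoint_left.1 (hAR v) hx' ((hZ i).1 hx)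
    · have hij : i ≠ j := by
        rintro rfl
        exact huv (hi.symm.trans hj)
      exact Finset.disjoint_left.1 (hZd hij) hx hx'
  · intro u v huv
    by_cases hu : u ∈ S
    · obtain ⟨y, hy⟩ := hne v
      obtain ⟨z, hz, hzy⟩ := (hZ (Sum.inl u)).2.2.1 hu y
      exact ⟨z, Or.inr ⟨_, rfl, hz⟩, y, hy, hzy⟩
    by_cases hv : v ∈ S
    · obtain ⟨y, hy⟩ := hne u
      obtain ⟨z, hz, hzy⟩ := (hZ (Sum.inl v)).2.2.1 hv y
      exact ⟨y, hy, z, Or.inr ⟨_, rfl, hz⟩, hzy.symm⟩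
    by_cases hp : (u, v) ∈ P
    · obtain ⟨w, hw, -, y, hy, hwy⟩ := (hZ (Sum.inr ⟨(u, v), hp⟩)).2
      refine ⟨w, Or.inr ⟨Sum.inr ⟨(u, v), hp⟩, rfl, ?_⟩, y, Or.inl hy, hwy⟩
      rw [hw]
      exact Finset.mem_singleton_self w
    · obtain ⟨x, hx, y, hy, hxy⟩ := hP u v huv hu hv hp
      exact ⟨x, Or.inl hx, y, Or.inl hy, hxy⟩

/-! ### Minors of dense graphs -/

open Classical in
/-- Minimum degree at least `5n / 8` forces `n / 4` common neighbours for any two vertices. -/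
theorem common_nbrs {V : Type} [Fintype V] (G : SimpleGraph V) (δ : ℝ)
    (h : ∀ v, δ ≤ (G.neighborSet v).ncard) (hδ : 5 * (Fintype.card V : ℝ) ≤ 8 * δ) (u v : V) :
    Fintype.card V ≤ 4 * (Finset.univ.filter fun x => G.Adj u x ∧ G.Adj v x).card := by
  have hdeg : ∀ v, (G.neighborSet v).ncard = (Finset.univ.filter fun x => G.Adj v x).card := by
    intro v
    rw [← Set.ncard_coe_finset]
    congr 1
    ext x
    simp
  have h1 := Finset.card_union_add_card_inter (Finset.univ.filter fun x => G.Adj u x)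
    (Finset.univ.filter fun x => G.Adj v x)
  have h2 := Finset.card_le_univ
    ((Finset.univ.filter fun x => G.Adj u x) ∪ (Finset.univ.filter fun x => G.Adj v x))
  rw [← Finset.filter_and, ← hdeg, ← hdeg] at h1
  have h3 : ((G.neighborSet u).ncard + (G.neighborSet v).ncard : ℝ) ≤ Fintype.card V +
      (Finset.univ.filter fun x => G.Adj u x ∧ G.Adj v x).card := by
    exact_mod_cast (by omega)
  have h4 := h u
  have h5 := h v
  have h6 : (Fintype.card V : ℝ) ≤
      4 * (Finset.univ.filter fun x => G.Adj u x ∧ G.Adj v x).card := by linarith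
  exact_mod_cast h6

open Classical in
/-- A graph on `n` vertices with minimum degree `δ ≥ 5n / 8` contains `H` as a minor, provided blocks
of size `a` leave at most `t` edges of `H - S` unrealised on average (`hρ`) and the connecting sets
fit into the reserve (`hB`). -/
theorem hasMinor_of_dense {V U : Type} [Fintype V] [Fintype U] (G : SimpleGraph V)
    (H : SimpleGraph U) (S : Finset U) (δ μ d : ℝ) (s t a τ ls la : ℕ)
    (hU : Fintype.card U = s + t) (hS : S.card = s) (ht : 8 ≤ t)
    (hd : avgDeg (H.induce ((S : Set U)ᶜ)) = d)
    (hn : 10 ^ 9 ≤ Fintype.card V) (hδ : 5 * (Fintype.card V : ℝ) ≤ 8 * δ)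
    (hdeg : ∀ v, δ ≤ (G.neighborSet v).ncard)
    (hμ : 0 < μ) (hμδ : (Fintype.card V : ℝ) - δ ≤ μ * (0.98 * Fintype.card V))
    (ha : 0 < a) (ha2 : 9 * a ^ 2 ≤ Fintype.card V) (hτa : 50 * (τ * a) ≤ 49 * Fintype.card V)
    (htτ : 50 * t ≤ 49 * τ)
    (hρ : 8 * d * (200 * μ ^ a) ^ a * τ ^ 2 ≤ t ^ 2)
    (hls : 19 ^ ls * Fintype.card V < 20 ^ ls) (hla : 19 ^ la * a < 20 ^ la)
    (hB : 1000 * (s * (2 * ls) + t * (2 * la) + t) ≤ Fintype.card V) :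
    HasMinor G H := by
  obtain ⟨R, hR1, hR2⟩ := exists_reserve G hn (common_nbrs G δ hdeg hδ)
  set n := Fintype.card V with hnV
  let W : Type := {v : V // v ∉ R}
  have hW : Fintype.card W = n - R.card := by
    simp only [W, Fintype.card_subtype_compl, Fintype.card_coe, hnV]
  have hRn : R.card ≤ n := by omega
  have hWr : (Fintype.card W : ℝ) = n - R.card := by rw [hW]; push_cast [hRn]; ring
  have hR1r : 50 * (R.card : ℝ) ≤ n := by exact_mod_cast hR1
  have hnon : ∀ v : W, ((Finset.univ.filter fun u : W => ¬ G.Adj v u).card : ℝ) ≤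
      μ * Fintype.card W := by
    intro v
    have h1 : (Finset.univ.filter fun u : W => ¬ G.Adj v u).card ≤
        (Finset.univ.filter fun u : V => ¬ G.Adj v u).card := by
      refine Finset.card_le_card_of_injOn (fun u => (u : V)) ?_ ?_
      · intro u hu
        have := (Finset.mem_filter.1 (Finset.mem_coe.1 hu)).2
        exact Finset.mem_coe.2 (Finset.mem_filter.2 ⟨Finset.mem_univ _, this⟩)
      · exact fun u _ u' _ h => Subtype.ext h
    have h2 := Finset.card_filter_add_card_filter_not (s := (Finset.univ : Finset V))
      (fun u : V => G.Adj v u)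
    have h3 : (G.neighborSet (v : V)).ncard = (Finset.univ.filter fun x => G.Adj (v : V) x).card := by
      rw [← Set.ncard_coe_finset]
      congr 1
      ext x
      simp
    rw [← h3, Finset.card_univ, ← hnV] at h2
    have h4 : ((G.neighborSet (v : V)).ncard : ℝ) +
        (Finset.univ.filter fun u : V => ¬ G.Adj v u).card = n := by exact_mod_cast h2
    have h5 : ((Finset.univ.filter fun u : W => ¬ G.Adj v u).card : ℝ) ≤
        (Finset.univ.filter fun u : V => ¬ G.Adj v u).card := by exact_mod_cast h1
    have h6 := hdeg v
    have h7 : μ * (0.98 * n) ≤ μ * Fintype.card W := by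
      apply mul_le_mul_of_nonneg_left _ hμ.le
      rw [hWr]
      linarith
    linarith
  obtain ⟨A, hA1, hA2, hA3⟩ := exists_blocks (fun v u : W => G.Adj v u) μ hμ hnon a τ t ha
    (by rw [hW]; omega) (by rw [hW]; omega) htτ (by omega)
  let X : Type := ((S : Set U)ᶜ : Set U)
  have hX : Fintype.card X = t := by
    have : Fintype.card X = Sᶜ.card := by
      rw [← Fintype.card_coe]
      exact Fintype.card_congr (Equiv.subtypeEquivRight fun u => by simp)
    rw [this, Finset.card_compl]
    omega
  let K : SimpleGraph X := H.induce ((S : Set U)ᶜ)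
  obtain ⟨π, hπ⟩ := exists_placement (X := X) (Y := Fin t) (by rw [hX]; simp) (by simpa using ht) K
    (fun i j => ∀ u ∈ A i, ∀ v ∈ A j, ¬ G.Adj (v : V) (u : V))
  have hE := card_adj_pairs K (by rw [hX]; omega)
  rw [hX] at hE
  rw [show avgDeg K = d from hd] at hE
  have hE' : ((Finset.univ.filter fun p : X × X => K.Adj p.1 p.2).card : ℝ) = d * t := by
    rw [← hE]
    congr!
  clear hE
  set P₀ := Finset.univ.filter fun p : X × X => K.Adj p.1 p.2 ∧
    ∀ u ∈ A (π p.1), ∀ v ∈ A (π p.2), ¬ G.Adj (v : V) (u : V) with hP₀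
  set E := Finset.univ.filter fun p : X × X => K.Adj p.1 p.2 with hEdef
  have hPt : P₀.card ≤ t := by
    have htr : (0 : ℝ) < t := by exact_mod_cast (by omega : 0 < t)
    have hd0 : 0 ≤ d := by
      have : 0 ≤ d * t := by rw [← hE']; positivity
      exact nonneg_of_mul_nonneg_left this htr
    rw [Fintype.card_fin] at hπ
    have hπ' : P₀.card * t ^ 2 ≤ 2 * E.card * (Finset.univ.filter fun p : Fin t × Fin t =>
        p.1 ≠ p.2 ∧ ∀ u ∈ A p.1, ∀ v ∈ A p.2, ¬ G.Adj (v : V) (u : V)).card := by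
      convert hπ
    have h1 := (Nat.cast_le (α := ℝ)).2 hπ'
    push_cast at h1
    rw [hE'] at h1
    have h2 : (P₀.card : ℝ) * t ^ 2 ≤ 2 * (d * t) * (4 * (200 * μ ^ a) ^ a * τ ^ 2) := by
      refine h1.trans (mul_le_mul_of_nonneg_left ?_ (by positivity))
      convert hA3 <;> rfl
    have h3 : 2 * (d * t) * (4 * (200 * μ ^ a) ^ a * τ ^ 2) ≤ t * (t : ℝ) ^ 2 := by
      calc _ = t * (8 * d * (200 * μ ^ a) ^ a * τ ^ 2) := by ring
        _ ≤ _ := mul_le_mul_of_nonneg_left hρ htr.le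
    have h4 := le_of_mul_le_mul_right (h2.trans h3) (by positivity)
    exact_mod_cast h4
  let ι : W ↪ V := Function.Embedding.subtype _
  have hmemX : ∀ u, u ∉ S → u ∈ ((S : Set U)ᶜ : Set U) := fun u hu => by simpa using hu
  let A' : U → Finset V := fun u => if h : u ∈ S then ∅ else (A (π ⟨u, hmemX u h⟩)).map ι
  have hA' : ∀ u (h : u ∉ S), A' u = (A (π ⟨u, hmemX u h⟩)).map ι := fun u h => by simp [A', h]
  have hA'S : ∀ u ∈ S, A' u = ∅ := fun u h => by simp [A', h]
  refine hasMinor_of_blocks G H S R A' (P₀.image fun p => ((p.1 : U), (p.2 : U))) a ls la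
    (s * (2 * ls) + t * (2 * la) + t) (by omega) ha ?_ ?_ ?_ ?_ ?_ hls hla ?_ hB hR1 hR2
  · intro u hu
    rw [hA' u hu, Finset.card_map, hA1]
  · intro u v huv
    by_cases hu : u ∈ S
    · simp [hA'S u hu]
    by_cases hv : v ∈ S
    · simp [hA'S v hv]
    change Disjoint (A' u) (A' v)
    rw [hA' u hu, hA' v hv, Finset.disjoint_map]
    apply hA2
    intro h
    exact huv (congrArg Subtype.val (π.injective h))
  · intro u
    by_cases hu : u ∈ S
    · simp [hA'S u hu]
    rw [hA' u hu]
    refine Finset.disjoint_left.2 fun x hx => ?_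
    obtain ⟨y, -, rfl⟩ := Finset.mem_map.1 hx
    exact y.2
  · intro p hp
    obtain ⟨q, -, rfl⟩ := Finset.mem_image.1 hp
    exact ⟨fun h => q.1.2 (Finset.mem_coe.2 h), fun h => q.2.2 (Finset.mem_coe.2 h)⟩
  · intro u v huv hu hv hp
    by_contra hcon
    push Not at hcon
    apply hp
    refine Finset.mem_image.2 ⟨(⟨u, hmemX u hu⟩, ⟨v, hmemX v hv⟩), ?_, rfl⟩
    refine Finset.mem_filter.2 ⟨Finset.mem_univ _, huv, fun x hx y hy hxy => ?_⟩
    rw [hA' u hu, hA' v hv] at hcon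
    exact hcon x (Finset.mem_map_of_mem ι hx) y (Finset.mem_map_of_mem ι hy) hxy.symm
  · have h1 : Sᶜ.card = t := by rw [Finset.card_compl]; omega
    have h2 : (P₀.image fun p => ((p.1 : U), (p.2 : U))).card ≤ P₀.card := Finset.card_image_le
    rw [hS, h1]
    omega

/-! ### Numerical estimates -/

/-- Turns the edge density `y` into the exponent used in `density_numeric`. -/
theorem one_sub_le_exp_neg_two_sq (y : ℝ) (h0 : 0.625 ≤ y) (h1 : y ≤ 1) :
    1 - y ≤ Real.exp (-(2 * y ^ 2)) := by
  have e1 : 0.367 < Real.exp (-1) := by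
    have := Real.exp_neg_one_gt_d9
    linarith
  have e2 : 0.86 ≤ Real.exp (-0.14) := by
    have := Real.add_one_le_exp (-0.14)
    linarith
  have e3 : 0.27 ≤ Real.exp (-1.28) := by
    have : Real.exp (-1.28) = Real.exp (-1) * (Real.exp (-0.14) * Real.exp (-0.14)) := by
      rw [← Real.exp_add, ← Real.exp_add]
      norm_num
    rw [this]
    have h2 : 0.86 * 0.86 ≤ Real.exp (-0.14) * Real.exp (-0.14) :=
      mul_le_mul e2 e2 (by norm_num) (by positivity)
    have h3 := mul_le_mul e1.le h2 (by norm_num) (by positivity)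
    linarith
  have e4 : Real.exp (-(2 * y ^ 2)) = Real.exp (-1.28) * Real.exp (1.28 - 2 * y ^ 2) := by
    rw [← Real.exp_add]
    congr 1
    ring
  have e5 : 2.28 - 2 * y ^ 2 ≤ Real.exp (1.28 - 2 * y ^ 2) := by
    have := Real.add_one_le_exp (1.28 - 2 * y ^ 2)
    linarith
  have e6 : 0 ≤ 2.28 - 2 * y ^ 2 := by nlinarith
  rw [e4]
  have e7 := mul_le_mul e3 e5 e6 (by positivity)
  nlinarith

/-- A greedy dominating procedure on `m` vertices needs at most `20 log m + 1` rounds. -/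
theorem exists_log_length (m : ℕ) (hm : 1 ≤ m) :
    ∃ l : ℕ, (l : ℝ) ≤ 20 * Real.log m + 1 ∧ 19 ^ l * m < 20 ^ l := by
  have hm' : (1 : ℝ) ≤ m := by exact_mod_cast hm
  have hlog : 0 ≤ Real.log m := Real.log_nonneg hm'
  refine ⟨⌊20 * Real.log m⌋₊ + 1, ?_, ?_⟩
  · push_cast
    have := Nat.floor_le (by positivity : 0 ≤ 20 * Real.log m)
    linarith
  · set l := ⌊20 * Real.log m⌋₊ + 1 with hl
    have h1 : 20 * Real.log m < l := by
      rw [hl]; push_cast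
      exact Nat.lt_floor_add_one _
    have h2 : (m : ℝ) < Real.exp (1 / 20) ^ l := by
      rw [← Real.exp_nat_mul, ← Real.log_lt_iff_lt_exp (by linarith)]
      linarith
    have h3 : (19 : ℝ) * Real.exp (1 / 20) ≤ 20 := by
      have h4 := Real.add_one_le_exp (-(1 / 20) : ℝ)
      have h5 : Real.exp (-(1 / 20)) * Real.exp (1 / 20) = 1 := by
        rw [← Real.exp_add]; simp
      have h6 : 0 < Real.exp (1 / 20) := Real.exp_pos _
      nlinarith
    have h4 : (19 : ℝ) ^ l * m < 20 ^ l := by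
      calc (19 : ℝ) ^ l * m < 19 ^ l * Real.exp (1 / 20) ^ l :=
            mul_lt_mul_of_pos_left h2 (by positivity)
        _ = (19 * Real.exp (1 / 20)) ^ l := (mul_pow _ _ _).symm
        _ ≤ _ := pow_le_pow_left₀ (by positivity) h3 l
    exact_mod_cast h4

/-- The bound on the density of bad pairs of blocks: since `1 - y ≤ exp (-2y²)`, it is about
`exp (-2 (a y)²) ≤ exp (-1.125 L²)`, which beats `d = exp (L²)`. -/
theorem density_numeric (L d y μ : ℝ) (a : ℕ) (hL : 10 ^ 14 ≤ L) (hd : d = Real.exp (L ^ 2))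
    (hy0 : 0.625 ≤ y) (hy1 : y ≤ 1) (hμ0 : 0 < μ) (hμ : μ = (1 - y) / 0.98)
    (ha0 : 0.75 * L ≤ a * y) (ha1 : (a : ℝ) ≤ 1.3 * L) :
    9 * d * (200 * μ ^ a) ^ a ≤ 1 := by
  have hμ' : μ ≤ Real.exp (0.0205 - 2 * y ^ 2) := by
    have h1 := one_sub_le_exp_neg_two_sq y hy0 hy1
    have h2 : 1 / 0.98 ≤ Real.exp (0.0205) := by
      have := Real.add_one_le_exp (0.0205 : ℝ)
      refine le_trans ?_ this
      norm_num
    have h3 : Real.exp (0.0205 - 2 * y ^ 2) = Real.exp 0.0205 * Real.exp (-(2 * y ^ 2)) := by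
      rw [← Real.exp_add]; ring_nf
    rw [hμ, h3, div_eq_mul_one_div, mul_comm]
    exact mul_le_mul h2 h1 (by linarith) (by positivity)
  have h9 : (9 : ℝ) ≤ Real.exp 3 := by
    have h1 : (2.7 : ℝ) ≤ Real.exp 1 := by
      have := Real.exp_one_gt_d9; linarith
    have h2 : Real.exp 3 = Real.exp 1 ^ 3 := by rw [← Real.exp_nat_mul]; norm_num
    rw [h2]
    exact le_trans (by norm_num) (pow_le_pow_left₀ (by norm_num) h1 3)
  have h200 : (200 : ℝ) ≤ Real.exp 6 := by
    have h1 : (2.7 : ℝ) ≤ Real.exp 1 := by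
      have := Real.exp_one_gt_d9; linarith
    have h2 : Real.exp 6 = Real.exp 1 ^ 6 := by rw [← Real.exp_nat_mul]; norm_num
    rw [h2]
    exact le_trans (by norm_num) (pow_le_pow_left₀ (by norm_num) h1 6)
  have hb : (200 * μ ^ a) ^ a ≤ Real.exp (a * (6 + a * (0.0205 - 2 * y ^ 2))) := by
    rw [Real.exp_nat_mul, Real.exp_add, Real.exp_nat_mul]
    gcongr
  have hexp : 3 + L ^ 2 + a * (6 + a * (0.0205 - 2 * y ^ 2)) ≤ 0 := by
    have h1 : (0.75 * L) ^ 2 ≤ (a * y) ^ 2 := pow_le_pow_left₀ (by linarith) ha0 2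
    have h2 : (a : ℝ) ^ 2 ≤ (1.3 * L) ^ 2 := pow_le_pow_left₀ (by positivity) ha1 2
    nlinarith
  calc 9 * d * (200 * μ ^ a) ^ a
      ≤ Real.exp 3 * Real.exp (L ^ 2) * Real.exp (a * (6 + a * (0.0205 - 2 * y ^ 2))) := by
        rw [hd]
        gcongr
    _ = Real.exp (3 + L ^ 2 + a * (6 + a * (0.0205 - 2 * y ^ 2))) := by
        rw [Real.exp_add, Real.exp_add]
    _ ≤ 1 := Real.exp_le_one_iff.2 hexp

/-- The connecting sets fit into the reserve. The hypothesis on `s` enters through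
`s log n ≤ 10⁻⁵ n`, as `log x / x` is decreasing. -/
theorem budget_numeric (L T n s la ls A : ℝ) (hL : 10 ^ 14 ≤ L) (hT : 3 ≤ T)
    (hn : 0.9 * (T * L) ≤ n) (hs0 : 0 ≤ s) (hs : s ≤ 1 / 100000 * T / Real.log T)
    (hA0 : 0 < A) (hA : A ≤ 1.3 * L) (hls : ls ≤ 20 * Real.log n + 1)
    (hla : la ≤ 20 * Real.log A + 1) :
    1000 * (s * (2 * ls) + T * (2 * la) + T) ≤ n := by
  have hTn : T ≤ n := by nlinarith
  have hlogT : 1 ≤ Real.log T := by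
    rw [Real.le_log_iff_exp_le (by linarith)]
    have := Real.exp_one_lt_d9
    linarith
  have hsT : s * Real.log T ≤ 1 / 100000 * T := by
    rwa [le_div_iff₀ (by linarith)] at hs
  have hanti : Real.log n / n ≤ Real.log T / T := by
    have he : Real.exp 1 ≤ T := by
      have := Real.exp_one_lt_d9
      linarith
    exact Real.log_div_self_antitoneOn he (he.trans hTn) hTn
  have hcross : T * Real.log n ≤ n * Real.log T := by
    rw [div_le_div_iff₀ (by linarith) (by linarith)] at hanti
    linarith
  have hsn : s * Real.log n ≤ 1 / 100000 * n := by
    have h1 : (s * Real.log n) * T ≤ (1 / 100000 * n) * T := by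
      calc (s * Real.log n) * T = s * (T * Real.log n) := by ring
        _ ≤ s * (n * Real.log T) := mul_le_mul_of_nonneg_left hcross hs0
        _ = n * (s * Real.log T) := by ring
        _ ≤ n * (1 / 100000 * T) := mul_le_mul_of_nonneg_left hsT (by linarith)
        _ = _ := by ring
    exact le_of_mul_le_mul_right h1 (by linarith)
  have hs1 : s ≤ 1 / 100000 * T := by nlinarith
  have h1 : s * ls ≤ 20 * (1 / 100000 * n) + 1 / 100000 * T := by
    have := mul_le_mul_of_nonneg_left hls hs0
    linarith
  obtain ⟨q, hq0, hq⟩ : ∃ q : ℝ, 0 ≤ q ∧ q ^ 2 = L :=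
    ⟨√L, Real.sqrt_nonneg _, Real.sq_sqrt (by linarith)⟩
  have hq7 : 10 ^ 7 ≤ q := by
    by_contra hcon
    push Not at hcon
    nlinarith
  have hlogA : Real.log A ≤ 4 * q := by
    have h2 : A ≤ (2 * q) ^ 2 := by rw [mul_pow, hq]; linarith
    have h3 := Real.log_le_log hA0 h2
    rw [Real.log_pow] at h3
    have h4 := Real.log_le_sub_one_of_pos (by linarith : 0 < 2 * q)
    push_cast at h3
    linarith
  have h2 : T * la ≤ T * (80 * q + 1) := mul_le_mul_of_nonneg_left (by linarith) (by linarith)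
  have h3 : T * (160000 * q + 3000) ≤ T * (0.2 * L) := by
    apply mul_le_mul_of_nonneg_left _ (by linarith)
    rw [← hq]
    nlinarith
  have h4 : T * 100 ≤ T * L := mul_le_mul_of_nonneg_left (by linarith) (by linarith)
  linarith

/-! ### The theorem -/

theorem avgDeg_le_card_compl {U : Type} [Fintype U] (H : SimpleGraph U) (S : Finset U) (s t : ℕ)
    (hU : Fintype.card U = s + t) (hS : S.card = s) (ht : 0 < t) :
    avgDeg (H.induce ((S : Set U)ᶜ)) ≤ t := by
  classical
  have hX : Fintype.card ((S : Set U)ᶜ : Set U) = t := by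
    have : Fintype.card ((S : Set U)ᶜ : Set U) = Sᶜ.card := by
      rw [← Fintype.card_coe]
      exact Fintype.card_congr (Equiv.subtypeEquivRight fun u => by simp)
    rw [this, Finset.card_compl]
    omega
  have h := edges_le_sq (H.induce ((S : Set U)ᶜ))
  have ht' : (0 : ℝ) < t := by exact_mod_cast ht
  unfold avgDeg
  rw [Nat.card_eq_fintype_card (α := ((S : Set U)ᶜ : Set U)), hX, div_le_iff₀ ht']
  rw [hX] at h
  exact h

/-- A graph with at most one vertex has no minor with two or more vertices, so no negative
number forces an `H`-minor. -/
theorem nonneg_of_forces {U : Type} [Fintype U] (H : SimpleGraph U) (hU : 2 ≤ Fintype.card U)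
    (D : ℝ)
    (h : ∀ (V : Type) [Fintype V], ∀ G : SimpleGraph V, D ≤ avgDeg G → HasMinor G H) : 0 ≤ D := by
  by_contra hD
  push Not at hD
  have h1 : D ≤ avgDeg (⊥ : SimpleGraph Unit) := hD.le.trans (by unfold avgDeg; positivity)
  obtain ⟨φ, hne, -, hdis, -⟩ := h Unit ⊥ h1
  obtain ⟨u, v, huv⟩ := Fintype.one_lt_card_iff.1 hU
  obtain ⟨x, hx⟩ := hne u
  obtain ⟨y, hy⟩ := hne v
  exact Set.disjoint_left.1 (hdis huv) hx (by rwa [Subsingleton.elim x y])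

set_option maxHeartbeats 1000000 in
/-- The first conclusion of the theorem: after passing to the dense minor of `G` the branch sets
have size `a ≈ 0.75 L n / δ`, where `L = √(ln d)`, and all numerical requirements of
`hasMinor_of_dense` hold. -/
theorem hasMinor_of_avgDeg (s t : ℕ) (ht : 3 ≤ t)
    (hs : (s : ℝ) ≤ (1 / 100000 : ℝ) * t / Real.log t)
    {U : Type} [Fintype U] (H : SimpleGraph U) (S : Finset U)
    (hU : Fintype.card U = s + t) (hS : S.card = s) (d L : ℝ)
    (hd : avgDeg (H.induce ((S : Set U)ᶜ)) = d) (hdL : d = Real.exp (L ^ 2)) (hL : 10 ^ 14 ≤ L)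
    {V : Type} [Fintype V] (G : SimpleGraph V) (hG : 3.895 * t * L ≤ avgDeg G) :
    HasMinor G H := by
  have hdt : d ≤ t := hd ▸ avgDeg_le_card_compl H S s t hU hS (by omega)
  have htL : L ^ 2 + 1 ≤ t := le_trans (Real.add_one_le_exp _) (hdL ▸ hdt)
  have hLt : L ≤ t := by nlinarith
  have htLL : L * L ≤ t * L := by nlinarith
  have hD : 1000 ≤ 3.895 * t * L := by nlinarith
  obtain ⟨V', _, G', δ, hGG', hn0, hδD, hδn, hdeg⟩ := exists_dense_minor G _ hD hG
  refine hGG'.trans' ?_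
  set n := Fintype.card V' with hn
  have hδtL : 0.9036 * (t * L) ≤ δ := by nlinarith
  have hδ1 : δ ≤ (n : ℝ) - 1 := by
    obtain ⟨v⟩ := Fintype.card_pos_iff.1 hn0
    have h1 : (G'.neighborSet v).ncard < n := by
      rw [hn, ← Nat.card_eq_fintype_card, ← Set.ncard_univ]
      exact Set.ncard_lt_ncard
        ⟨Set.subset_univ _, fun h => G'.irrefl (v := v) (h (Set.mem_univ v))⟩
    have h2 : ((G'.neighborSet v).ncard : ℝ) + 1 ≤ n := by exact_mod_cast h1
    linarith [hdeg v]
  have hnR : (0 : ℝ) < n := by exact_mod_cast hn0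
  have hδ0 : 0 < δ := by nlinarith
  have hn9 : (10 : ℝ) ^ 28 ≤ 2 * n := by nlinarith
  have hnLL : 0.9 * (L * L) ≤ n := by nlinarith
  -- the edge density `y = δ / n` and the branch-set size `a`
  obtain ⟨y, hy⟩ : ∃ y, y = δ / n := ⟨_, rfl⟩
  have hyn : y * n = δ := by rw [hy]; field_simp
  have hy0 : 0.625 ≤ y := by rw [hy, le_div_iff₀ hnR]; linarith
  have hy1 : y < 1 := by rw [hy, div_lt_one hnR]; linarith
  have hypos : 0 < y := by linarith
  obtain ⟨a, ha⟩ : ∃ a : ℕ, a = ⌈0.75 * L / y⌉₊ := ⟨_, rfl⟩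
  have haL : 0.75 * L / y ≤ a := ha ▸ Nat.le_ceil _
  have haU : (a : ℝ) < 0.75 * L / y + 1 := ha ▸ Nat.ceil_lt_add_one (by positivity)
  have hay : 0.75 * L ≤ a * y := by rwa [div_le_iff₀ hypos] at haL
  have hay' : (a : ℝ) * y ≤ 0.75 * L + y := by
    have := mul_lt_mul_of_pos_right haU hypos
    rw [add_mul, div_mul_cancel₀ _ hypos.ne'] at this
    linarith
  have ha13 : (a : ℝ) ≤ 1.3 * L := by nlinarith
  have ha0 : (0 : ℝ) < a := lt_of_lt_of_le (by positivity) haL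
  obtain ⟨τ, hτ⟩ : ∃ τ : ℕ, τ = ⌈1.05 * (t : ℝ)⌉₊ := ⟨_, rfl⟩
  have hτL : 1.05 * (t : ℝ) ≤ τ := hτ ▸ Nat.le_ceil _
  have hτU : (τ : ℝ) ≤ 1.06 * t := by
    have := hτ ▸ Nat.ceil_lt_add_one (by positivity : 0 ≤ 1.05 * (t : ℝ))
    linarith
  obtain ⟨ls, hls, hls'⟩ := exists_log_length n hn0
  obtain ⟨la, hla, hla'⟩ := exists_log_length a (by exact_mod_cast ha0)
  have hρ := density_numeric L d y ((1 - y) / 0.98) a hL hdL hy0 hy1.le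
    (div_pos (by linarith) (by norm_num)) rfl hay ha13
  have hB := budget_numeric L t n s la ls a hL (by exact_mod_cast ht) (by linarith)
    (Nat.cast_nonneg _) hs ha0 ha13 hls hla
  refine hasMinor_of_dense G' H S δ ((1 - y) / 0.98) d s t a τ ls la hU hS ?_ hd ?_ hδn hdeg
    (div_pos (by linarith) (by norm_num)) ?_ (by exact_mod_cast ha0) ?_ ?_ ?_ ?_ hls' hla' ?_
  · have : (8 : ℝ) ≤ t := by linarith
    exact_mod_cast this
  · have : (10 : ℝ) ^ 9 ≤ n := by linarith
    exact_mod_cast this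
  · rw [← hn, ← hyn]
    apply le_of_eq
    ring
  · have : 9 * (a : ℝ) ^ 2 ≤ n := by
      have h1 : (a : ℝ) ^ 2 ≤ (1.3 * L) ^ 2 := pow_le_pow_left₀ ha0.le ha13 2
      have h2 : 15.3 * (L * L) ≤ t * L := by nlinarith
      nlinarith
    exact_mod_cast this
  · have : 50 * ((τ : ℝ) * a) ≤ 49 * n := by
      have h1 : (τ : ℝ) * a ≤ 1.06 * t * a := mul_le_mul_of_nonneg_right hτU ha0.le
      have h2 : (t : ℝ) * a * L ≤ 0.9 * (n * L) := by
        have h3 : 0.9036 * (t * L) * a ≤ n * (a * y) := by nlinarith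
        have h4 : (n : ℝ) * (a * y) ≤ n * (0.751 * L) :=
          mul_le_mul_of_nonneg_left (by linarith) hnR.le
        nlinarith
      have h5 : (t : ℝ) * a ≤ 0.9 * n := by
        refine le_of_mul_le_mul_right ?_ (by linarith : 0 < L)
        linarith
      linarith
    exact_mod_cast this
  · have : 50 * (t : ℝ) ≤ 49 * τ := by linarith
    exact_mod_cast this
  · have hnn : 0 ≤ d * (200 * ((1 - y) / 0.98) ^ a) ^ a := by
      have : 0 ≤ (1 - y) / 0.98 := div_nonneg (by linarith) (by norm_num)
      have : 0 ≤ d := by rw [hdL]; positivity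
      positivity
    have h1 : (τ : ℝ) ^ 2 ≤ (1.06 * t) ^ 2 := pow_le_pow_left₀ (Nat.cast_nonneg _) hτU 2
    have h2 : d * (200 * ((1 - y) / 0.98) ^ a) ^ a * (τ : ℝ) ^ 2 ≤ 1 / 9 * (1.06 * t) ^ 2 :=
      mul_le_mul (by linarith) h1 (by positivity) (by norm_num)
    nlinarith
  · exact_mod_cast hB

/-- There is a constant `d₀ > 0` such that for all integers `s ≥ 0` and
`t ≥ 3` with `s ≤ (1 / 100000 : ℝ)·t/ln t`, for every graph `H` on `s + t` vertices and every set
`S` of `s` vertices of `H` with `d(H − S) ≥ d₀`, every graph `G` with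
`d(G) ≥ 3.895·t·√(ln d(H − S))` contains `H` as a minor; in particular
`f(H) ≤ 3.895·t·√(ln d(H − S))`. -/
theorem statement0 :
    ∃ d₀ : ℝ, 0 < d₀ ∧
      ∀ (s t : ℕ), 3 ≤ t → (s : ℝ) ≤ (1 / 100000 : ℝ) * t / Real.log t →
        ∀ (U : Type) [Fintype U], ∀ (H : SimpleGraph U) (S : Finset U),
          Fintype.card U = s + t → S.card = s →
          d₀ ≤ avgDeg (H.induce ((S : Set U)ᶜ)) →
          (∀ (V : Type) [Fintype V], ∀ G : SimpleGraph V,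
              3.895 * t * Real.sqrt (Real.log (avgDeg (H.induce ((S : Set U)ᶜ)))) ≤ avgDeg G →
              HasMinor G H) ∧
          minorF H ≤ 3.895 * t * Real.sqrt (Real.log (avgDeg (H.induce ((S : Set U)ᶜ)))) := by
  -- `d₀` is chosen so that `√(ln d) ≥ 10 ^ 14`, which absorbs all lower-order terms
  refine ⟨Real.exp (10 ^ 28), Real.exp_pos _, fun s t ht hs U _ H S hU hS hd => ?_⟩
  have hdpos : 0 < avgDeg (H.induce ((S : Set U)ᶜ)) := lt_of_lt_of_le (Real.exp_pos _) hd
  have hlog : 10 ^ 28 ≤ Real.log (avgDeg (H.induce ((S : Set U)ᶜ))) :=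
    (Real.le_log_iff_exp_le hdpos).2 hd
  have hL : 10 ^ 14 ≤ Real.sqrt (Real.log (avgDeg (H.induce ((S : Set U)ᶜ)))) := by
    apply Real.le_sqrt_of_sq_le
    refine le_trans (le_of_eq ?_) hlog
    norm_num
  have hdL : avgDeg (H.induce ((S : Set U)ᶜ)) =
      Real.exp (Real.sqrt (Real.log (avgDeg (H.induce ((S : Set U)ᶜ)))) ^ 2) := by
    rw [Real.sq_sqrt (by linarith), Real.exp_log hdpos]
  have hmain : ∀ (V : Type) [Fintype V], ∀ G : SimpleGraph V,
      3.895 * t * Real.sqrt (Real.log (avgDeg (H.induce ((S : Set U)ᶜ)))) ≤ avgDeg G →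
      HasMinor G H := fun V _ G hG =>
    hasMinor_of_avgDeg s t ht hs H S hU hS _ _ rfl hdL hL G hG
  exact ⟨hmain, csInf_le ⟨0, fun D hD => nonneg_of_forces H (by omega) D hD⟩ hmain⟩
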